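/- arXiv:2209.01934 — 3 statements merged into one kernel-verified Lean document; each statement's English description precedes it below -/
import Mathlib

section
/- Solution of the limiting differential equation in the strong non-unitarity regime (Lemma 2.3(a)). Fix w ∈ ℂ. (i) The function z ↦ K_s^{bulk}(z,w) := e^{−z²−w²} κ_s^{bulk}(z,w) satisfies K_s^{bulk}(w,w) = 0 and, for every z ∈ ℂ, its complex derivative in z equals 2 e^{−(z−w)²}. (ii) The function z ↦ K_s^{edge}(z,w) := e^{−z²−w²} κ_s^{edge}(z,w) satisfies K_s^{edge}(w,w) = 0 and, for every z ∈ ℂ, its complex derivative in z equals e^{−(z−w)²} erfc(z+w) − (1/√2) e^{−2z²} erfc(√2 w). -/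
open MeasureTheory Filter Finset

noncomputable section

namespace SI

/-- The entire extension of the error function: `erf(z) = (2/√π)∫₀¹ z e^{-s²z²} ds`. -/
def cerf (z : ℂ) : ℂ :=
  (2 / (Real.sqrt Real.pi : ℂ)) * ∫ s in (0:ℝ)..1, z * Complex.exp (-((s:ℂ)^2 * z^2))

/-- `erfc(z) = 1 - erf(z)`. -/
def cerfc (z : ℂ) : ℂ := 1 - cerf z

/-- `f_z(u) = (1/2) erfc(√2 (z-u))`. -/
def fz (z : ℂ) (u : ℝ) : ℂ := (1/2) * cerfc ((Real.sqrt 2 : ℂ) * (z - (u:ℂ)))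

/-- The Wronskian `W(f_w, f_z)(u) = f_w(u) f_z'(u) - f_z(u) f_w'(u)` (derivative in `u`). -/
def Wr (w z : ℂ) (u : ℝ) : ℂ := fz w u * deriv (fz z) u - fz z u * deriv (fz w) u

/-- The bulk limiting kernel `κ_s^{bulk}`. -/
def kbulk (z w : ℂ) : ℂ :=
  (Real.sqrt Real.pi : ℂ) * Complex.exp (z^2+w^2) * ∫ u : ℝ, Wr w z u

/-- The edge limiting kernel `κ_s^{edge}`. -/
def kedge (z w : ℂ) : ℂ :=
  (Real.sqrt Real.pi : ℂ) * Complex.exp (z^2+w^2) * ∫ u in Set.Iio (0:ℝ), Wr w z u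

/-- The bulk inhomogeneous term `F_s` (bulk case). -/
def Fsbulk (z w : ℂ) : ℂ := 2 * Complex.exp (-(z-w)^2)

/-- The edge inhomogeneous term `F_s` (edge case). -/
def Fsedge (z w : ℂ) : ℂ :=
  Complex.exp (-(z-w)^2) * cerfc (z+w)
    - (1/(Real.sqrt 2 : ℂ)) * Complex.exp (-2*z^2) * cerfc ((Real.sqrt 2 : ℂ) * w)

lemma hasDerivAt_cerf (z : ℂ) :
    HasDerivAt cerf ((2 / (Real.sqrt Real.pi : ℂ)) * Complex.exp (-z^2)) z := by
  have hd : DifferentiableOn ℂ (fun z : ℂ => Complex.exp (-z^2)) (Metric.ball 0 (‖z‖+1)) := by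
    fun_prop
  obtain ⟨P, hP⟩ := hd.isExactOn_ball
  have hz : z ∈ Metric.ball (0:ℂ) (‖z‖+1) := by simp
  have key : ∀ x ∈ Metric.ball (0:ℂ) (‖z‖+1),
      cerf x = (2 / (Real.sqrt Real.pi : ℂ)) * (P x - P 0) := by
    intro x hx
    unfold cerf
    congr 1
    have h1 : ∀ s ∈ Set.uIcc (0:ℝ) 1,
        HasDerivAt (fun s : ℝ => P ((s:ℂ) * x)) (x * Complex.exp (-((s:ℂ)^2 * x^2))) s := by
      intro s hs
      rw [Set.uIcc_of_le zero_le_one] at hs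
      have hm : (s:ℂ) * x ∈ Metric.ball (0:ℂ) (‖z‖+1) := by
        simp only [Metric.mem_ball, dist_zero_right, norm_mul, Complex.norm_real, Real.norm_eq_abs,
          abs_of_nonneg hs.1] at hx ⊢
        nlinarith [norm_nonneg x, hs.2]
      have h2 : HasDerivAt (fun s : ℝ => (s:ℂ) * x) x s := by
        simpa using (Complex.ofRealCLM.hasDerivAt (x := s)).mul_const x
      have h3 := (hP _ hm).comp s h2
      refine HasDerivAt.congr_deriv h3 ?_
      simp only [mul_pow]; ring
    rw [intervalIntegral.integral_eq_sub_of_hasDerivAt h1]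
    · simp
    · apply Continuous.intervalIntegrable
      fun_prop
  have h4 : HasDerivAt (fun x => (2 / (Real.sqrt Real.pi : ℂ)) * (P x - P 0))
      ((2 / (Real.sqrt Real.pi : ℂ)) * Complex.exp (-z^2)) z :=
    ((hP z hz).sub_const _).const_mul _
  refine h4.congr_of_eventuallyEq ?_
  filter_upwards [Metric.isOpen_ball.mem_nhds hz] with x hx using key x hx

lemma hasDerivAt_cerfc (z : ℂ) :
    HasDerivAt cerfc (-((2 / (Real.sqrt Real.pi : ℂ)) * Complex.exp (-z^2))) z :=
  (hasDerivAt_cerf z).const_sub 1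

lemma sqrtpi_ne : (Real.sqrt Real.pi : ℂ) ≠ 0 := by
  exact_mod_cast (Real.sqrt_pos.mpr Real.pi_pos).ne'

lemma sqrtpi_sq : (Real.sqrt Real.pi : ℂ)^2 = (Real.pi : ℂ) := by
  exact_mod_cast Real.sq_sqrt Real.pi_pos.le

lemma sqrt2_ne : (Real.sqrt 2 : ℂ) ≠ 0 := by
  exact_mod_cast (Real.sqrt_pos.mpr (by norm_num : (0:ℝ) < 2)).ne'

lemma sqrt2_sq : (Real.sqrt 2 : ℂ)^2 = 2 := by
  exact_mod_cast Real.sq_sqrt (by norm_num : (0:ℝ) ≤ 2)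

/-- derivative of `fz`. -/
def gz (z : ℂ) (u : ℝ) : ℂ :=
  ((Real.sqrt 2 : ℂ) / (Real.sqrt Real.pi : ℂ)) * Complex.exp (-2 * (z - (u:ℂ))^2)

lemma fz_deriv_u (z : ℂ) (u : ℝ) : HasDerivAt (fz z) (gz z u) u := by
  have h2 : HasDerivAt (fun u : ℝ => (Real.sqrt 2 : ℂ) * (z - (u:ℂ))) (-(Real.sqrt 2 : ℂ)) u := by
    simpa using ((Complex.ofRealCLM.hasDerivAt (x := u)).const_sub z).const_mul (Real.sqrt 2 : ℂ)
  have h3 := ((hasDerivAt_cerfc _).comp u h2).const_mul (1/2 : ℂ)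
  refine HasDerivAt.congr_deriv h3 ?_
  unfold gz
  rw [mul_pow, sqrt2_sq]
  ring_nf

lemma fz_deriv_z (z : ℂ) (u : ℝ) : HasDerivAt (fun z => fz z u) (-gz z u) z := by
  have h2 : HasDerivAt (fun z : ℂ => (Real.sqrt 2 : ℂ) * (z - (u:ℂ))) ((Real.sqrt 2 : ℂ)) z := by
    simpa using ((hasDerivAt_id z).sub_const (u:ℂ)).const_mul (Real.sqrt 2 : ℂ)
  have h3 := ((hasDerivAt_cerfc _).comp z h2).const_mul (1/2 : ℂ)
  refine HasDerivAt.congr_deriv h3 ?_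
  unfold gz
  rw [mul_pow, sqrt2_sq]
  ring_nf

/-- `u`-derivative of `gz`. -/
def hz (z : ℂ) (u : ℝ) : ℂ := 4 * (z - (u:ℂ)) * gz z u

lemma gz_deriv_u (z : ℂ) (u : ℝ) : HasDerivAt (gz z) (hz z u) u := by
  have h2 : HasDerivAt (fun u : ℝ => (z - (u:ℂ))) (-1) u := by
    simpa using ((Complex.ofRealCLM.hasDerivAt (x := u)).const_sub z)
  have h3 := (((h2.pow 2).const_mul (-2:ℂ)).cexp).const_mul
    ((Real.sqrt 2 : ℂ) / (Real.sqrt Real.pi : ℂ))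
  refine HasDerivAt.congr_deriv h3 ?_
  unfold hz gz
  simp
  ring

lemma gz_deriv_z (z : ℂ) (u : ℝ) : HasDerivAt (fun z => gz z u) (-hz z u) z := by
  have h2 : HasDerivAt (fun z : ℂ => (z - (u:ℂ))) 1 z := by
    simpa using ((hasDerivAt_id z).sub_const (u:ℂ))
  have h3 := (((h2.pow 2).const_mul (-2:ℂ)).cexp).const_mul
    ((Real.sqrt 2 : ℂ) / (Real.sqrt Real.pi : ℂ))
  refine HasDerivAt.congr_deriv h3 ?_
  unfold hz gz
  simp
  ring

lemma Wr_eq (w z : ℂ) (u : ℝ) : Wr w z u = fz w u * gz z u - fz z u * gz w u := by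
  unfold Wr
  rw [(fz_deriv_u z u).deriv, (fz_deriv_u w u).deriv]

lemma fz_cont (z : ℂ) : Continuous (fz z) :=
  continuous_iff_continuousAt.mpr fun u => (fz_deriv_u z u).continuousAt
lemma gz_cont (z : ℂ) : Continuous (gz z) :=
  continuous_iff_continuousAt.mpr fun u => (gz_deriv_u z u).continuousAt
lemma hz_cont (z : ℂ) : Continuous (hz z) := by
  have := gz_cont z
  unfold hz; fun_prop

lemma norm_sqrtfrac_le : ‖(Real.sqrt 2 : ℂ) / (Real.sqrt Real.pi : ℂ)‖ ≤ 1 := by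
  rw [norm_div, Complex.norm_real, Complex.norm_real, Real.norm_of_nonneg (Real.sqrt_nonneg _),
    Real.norm_of_nonneg (Real.sqrt_nonneg _)]
  apply div_le_one_of_le₀ _ (Real.sqrt_nonneg _)
  exact Real.sqrt_le_sqrt (by linarith [Real.pi_gt_three])

lemma gz_bound {z : ℂ} {R : ℝ} (hR : ‖z‖ ≤ R) (u : ℝ) :
    ‖gz z u‖ ≤ Real.exp (6*R^2) * Real.exp (-1 * u^2) := by
  unfold gz
  rw [norm_mul, ← Real.exp_add]
  have h1 : ‖Complex.exp (-2 * (z - (u:ℂ))^2)‖ ≤ Real.exp (6*R^2 + -1 * u^2) := by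
    rw [Complex.norm_exp]
    apply Real.exp_le_exp.mpr
    have hre : (-2 * (z - (u:ℂ))^2).re = -2 * ((z.re - u)^2 - z.im^2) := by
      simp [pow_two]
    rw [hre]
    have h2 : z.re^2 + z.im^2 ≤ R^2 := by
      have : ‖z‖^2 = z.re^2 + z.im^2 := by rw [← Complex.normSq_eq_norm_sq, Complex.normSq_apply]; ring
      rw [← this]
      exact pow_le_pow_left₀ (norm_nonneg _) hR 2
    nlinarith [sq_nonneg (u - 2 * z.re), sq_nonneg z.re, sq_nonneg z.im]
  calc _ ≤ 1 * Real.exp (6*R^2 + -1 * u^2) :=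
        mul_le_mul norm_sqrtfrac_le h1 (norm_nonneg _) zero_le_one
    _ = _ := one_mul _

lemma gz_bound' {z : ℂ} {R : ℝ} (hR : ‖z‖ ≤ R) (u : ℝ) :
    ‖gz z u‖ ≤ Real.exp (6*R^2) * Real.exp (-(1/2) * u^2) := by
  refine (gz_bound hR u).trans ?_
  gcongr ?_ * Real.exp ?_
  nlinarith [sq_nonneg u]

lemma hz_bound {z : ℂ} {R : ℝ} (hR : ‖z‖ ≤ R) (u : ℝ) :
    ‖hz z u‖ ≤ 4 * (R + 1) * Real.exp (6*R^2) * Real.exp (-(1/2) * u^2) := by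
  unfold hz
  rw [norm_mul, norm_mul]
  have hR0 : 0 ≤ R := (norm_nonneg _).trans hR
  have h1 : ‖z - (u:ℂ)‖ ≤ (R + 1) * Real.exp ((1/2) * u^2) := by
    have h2 : ‖z - (u:ℂ)‖ ≤ R + |u| := by
      refine (norm_sub_le _ _).trans ?_
      simpa using hR
    have h3 := Real.add_one_le_exp ((1/2) * u^2)
    have h4 : |u| ≤ 1/2 * u^2 + 1 := by
      have := sq_abs u
      nlinarith [sq_nonneg (|u| - 1)]
    nlinarith [sq_nonneg u]
  calc _ ≤ ‖(4:ℂ)‖ * ((R + 1) * Real.exp ((1/2) * u^2)) *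
        (Real.exp (6*R^2) * Real.exp (-1 * u^2)) := by
        gcongr
        exact gz_bound hR u
    _ = 4 * (R+1) * Real.exp (6*R^2) * (Real.exp ((1/2) * u^2) * Real.exp (-1 * u^2)) := by
        simp; ring
    _ = _ := by
        rw [← Real.exp_add]; ring_nf

lemma int_half : Integrable (fun u : ℝ => Real.exp (-(1/2) * u^2)) :=
  integrable_exp_neg_mul_sq (by norm_num)

lemma gz_int (z : ℂ) : Integrable (gz z) :=
  (int_half.const_mul _).mono' (gz_cont z).aestronglyMeasurable
    (ae_of_all _ fun u => gz_bound' le_rfl u)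

lemma hz_int (z : ℂ) : Integrable (hz z) :=
  (int_half.const_mul _).mono' (hz_cont z).aestronglyMeasurable
    (ae_of_all _ fun u => hz_bound le_rfl u)

lemma fz_bdd (z : ℂ) : ∃ C, ∀ u, ‖fz z u‖ ≤ C := by
  refine ⟨‖fz z 0‖ + ∫ u, ‖gz z u‖, fun u => ?_⟩
  have h : ∫ t in (0:ℝ)..u, gz z t = fz z u - fz z 0 :=
    intervalIntegral.integral_eq_sub_of_hasDerivAt (fun t _ => fz_deriv_u z t)
      (gz_int z).intervalIntegrable
  have h2 : fz z u = fz z 0 + ∫ t in (0:ℝ)..u, gz z t := by rw [h]; ring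
  rw [h2]
  refine (norm_add_le _ _).trans ?_
  gcongr
  refine intervalIntegral.norm_integral_le_integral_norm_uIoc.trans ?_
  exact setIntegral_le_integral (gz_int z).norm (ae_of_all _ fun u => norm_nonneg _)

lemma fz_mul_int (w : ℂ) {g : ℝ → ℂ} (hg : Integrable g) : Integrable (fun u => fz w u * g u) := by
  obtain ⟨C, hC⟩ := fz_bdd w
  exact hg.bdd_mul (fz_cont w).aestronglyMeasurable (ae_of_all _ hC)

lemma gz_mul_int (w z : ℂ) : Integrable (fun u => gz w u * gz z u) := by
  refine (gz_int z).bdd_mul (c := Real.exp (6*‖w‖^2)) (gz_cont w).aestronglyMeasurable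
    (ae_of_all _ fun u => ?_)
  refine (gz_bound' le_rfl u).trans ?_
  apply mul_le_of_le_one_right (Real.exp_pos _).le
  apply Real.exp_le_one_iff.mpr
  nlinarith [sq_nonneg u]

/-- Derivative of the integral of the Wronskian. -/
lemma Wr_integral_deriv (w z : ℂ) (S : Set ℝ) :
    HasDerivAt (fun z => ∫ u in S, Wr w z u)
      (∫ u in S, (-(gz w u * gz z u + fz w u * hz z u) + 2 * (gz w u * gz z u))) z := by
  obtain ⟨C, hC⟩ := fz_bdd w
  have hC0 : 0 ≤ C := (norm_nonneg _).trans (hC 0)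
  have hm : ∀ x, Continuous (Wr w x) := by
    intro x
    have : Wr w x = fun u => fz w u * gz x u - fz x u * gz w u := funext (Wr_eq w x)
    rw [this]
    exact ((fz_cont w).mul (gz_cont x)).sub ((fz_cont x).mul (gz_cont w))
  have hcont : Continuous (fun u => (-(gz w u * gz z u + fz w u * hz z u) + 2 * (gz w u * gz z u))) := by
    have := fz_cont w
    have := gz_cont w
    have := gz_cont z
    have := hz_cont z
    fun_prop
  refine (hasDerivAt_integral_of_dominated_loc_of_deriv_le (μ := volume.restrict S)
    (F := fun z u => Wr w z u)
    (F' := fun z u => (-(gz w u * gz z u + fz w u * hz z u) + 2 * (gz w u * gz z u)))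
    (bound := fun u => (C * (4 * ((‖z‖+1) + 1) * Real.exp (6*(‖z‖+1)^2)) +
       Real.exp (6*‖w‖^2) * Real.exp (6*(‖z‖+1)^2)) * Real.exp (-(1/2) * u^2))
    (Metric.ball_mem_nhds z one_pos) ?_ ?_ ?_ ?_ ?_ ?_).2
  · exact Eventually.of_forall fun x => (hm x).aestronglyMeasurable
  · have : Wr w z = fun u => fz w u * gz z u - fz z u * gz w u := funext (Wr_eq w z)
    rw [this]
    exact ((fz_mul_int w (gz_int z)).sub (fz_mul_int z (gz_int w))).restrict
  · exact hcont.aestronglyMeasurable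
  · refine ae_of_all _ fun u x hx => ?_
    have hx' : ‖x‖ ≤ ‖z‖ + 1 := by
      have h1 : ‖x - z‖ < 1 := by simpa [dist_eq_norm] using hx
      have h2 := norm_sub_norm_le x z
      linarith
    have e : (-(gz w u * gz x u + fz w u * hz x u) + 2 * (gz w u * gz x u))
        = gz w u * gz x u - fz w u * hz x u := by ring
    rw [e]
    refine (norm_sub_le _ _).trans ?_
    rw [norm_mul, norm_mul]
    have b1 : ‖gz w u‖ ≤ Real.exp (6*‖w‖^2) := by
      refine (gz_bound' le_rfl u).trans ?_
      apply mul_le_of_le_one_right (Real.exp_pos _).le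
      apply Real.exp_le_one_iff.mpr
      nlinarith [sq_nonneg u]
    have b2 := mul_le_mul b1 (gz_bound' hx' u) (norm_nonneg _) (Real.exp_pos _).le
    have b3 := mul_le_mul (hC u) (hz_bound hx' u) (norm_nonneg _) hC0
    refine (add_le_add b2 b3).trans (le_of_eq ?_)
    ring
  · exact (int_half.const_mul _).restrict
  · refine ae_of_all _ fun u x _ => ?_
    have h := ((gz_deriv_z x u).const_mul (fz w u)).sub ((fz_deriv_z x u).mul_const (gz w u))
    have e : (fun z => Wr w z u) = fun z => fz w u * gz z u - fz z u * gz w u :=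
      funext fun z => Wr_eq w z u
    change HasDerivAt (fun z => Wr w z u) _ x
    rw [e]
    refine HasDerivAt.congr_deriv h ?_
    ring

lemma fg_deriv (w z : ℂ) (u : ℝ) :
    HasDerivAt (fun u => fz w u * gz z u) (gz w u * gz z u + fz w u * hz z u) u :=
  (fz_deriv_u w u).mul (gz_deriv_u z u)

lemma fg_int (w z : ℂ) : Integrable (fun u => gz w u * gz z u + fz w u * hz z u) :=
  (gz_mul_int w z).add (fz_mul_int w (hz_int z))

lemma fg_int_neg (w z : ℂ) : Integrable (fun u => -(gz w u * gz z u + fz w u * hz z u)) :=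
  (fg_int w z).neg

lemma gg_eq (w z : ℂ) (u : ℝ) : gz w u * gz z u =
    (2 / (Real.pi:ℂ)) * Complex.exp (-(z-w)^2) * Complex.exp (-(z+w-2*(u:ℂ))^2) := by
  unfold gz
  have e : Complex.exp (-2 * (w - (u:ℂ))^2) * Complex.exp (-2 * (z - (u:ℂ))^2)
      = Complex.exp (-(z-w)^2) * Complex.exp (-(z+w-2*(u:ℂ))^2) := by
    rw [← Complex.exp_add, ← Complex.exp_add]; congr 1; ring
  calc _ = ((Real.sqrt 2 : ℂ)^2 / (Real.sqrt Real.pi : ℂ)^2) *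
      (Complex.exp (-2 * (w - (u:ℂ))^2) * Complex.exp (-2 * (z - (u:ℂ))^2)) := by ring
    _ = _ := by rw [e, sqrt2_sq, sqrtpi_sq]; ring

lemma prim_deriv (a : ℂ) (u : ℝ) :
    HasDerivAt (fun u : ℝ => ((Real.sqrt Real.pi : ℂ)/4) * cerfc (a - 2*(u:ℂ)))
      (Complex.exp (-(a-2*(u:ℂ))^2)) u := by
  have h2 : HasDerivAt (fun u : ℝ => a - 2*(u:ℂ)) (-2) u := by
    simpa using ((Complex.ofRealCLM.hasDerivAt (x := u)).const_mul 2).const_sub a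
  have h3 := ((hasDerivAt_cerfc _).comp u h2).const_mul ((Real.sqrt Real.pi : ℂ)/4)
  refine HasDerivAt.congr_deriv h3 ?_
  have := sqrtpi_ne
  field_simp
  norm_num

lemma gauss_int (a : ℂ) : Integrable (fun u : ℝ => Complex.exp (-(a-2*(u:ℂ))^2)) := by
  have := integrable_cexp_quadratic' (b := -4) (by norm_num) (4*a) (-a^2)
  convert this using 3
  ring

lemma gauss_integral (a : ℂ) : ∫ u : ℝ, Complex.exp (-(a-2*(u:ℂ))^2) =
    (Real.sqrt Real.pi : ℂ)/2 := by
  have := integral_cexp_quadratic (b := -4) (by norm_num) (4*a) (-a^2)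
  have e : ∀ u : ℝ, -(a-2*(u:ℂ))^2 = -4 * (u:ℂ)^2 + 4*a*u + -a^2 := by intro u; ring
  simp_rw [e]
  rw [this]
  have e2 : -a^2 - (4*a)^2 / (4 * -4) = 0 := by ring
  rw [e2, Complex.exp_zero, mul_one, neg_neg]
  have e3 : ((Real.pi:ℂ)/4) = ((Real.pi/4 : ℝ) : ℂ) := by push_cast; rfl
  have e4 : (1/2 : ℂ) = ((1/2 : ℝ) : ℂ) := by push_cast; rfl
  rw [e3, e4, ← Complex.ofReal_cpow (by positivity), ← Real.sqrt_eq_rpow,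
    Real.sqrt_div Real.pi_pos.le]
  have : Real.sqrt 4 = 2 := by
    rw [show (4:ℝ) = 2^2 by norm_num]; exact Real.sqrt_sq (by norm_num)
  rw [this]; push_cast; rfl

open Topology in
lemma cerfc_real_tendsto : Tendsto (fun t : ℝ => cerfc (t:ℂ)) atTop (𝓝 0) := by
  have hint : Integrable (fun x : ℝ => Complex.exp (-(x:ℂ)^2)) := by
    have := integrable_cexp_neg_mul_sq (b := 1) (by norm_num)
    simpa using this
  have h0 : ∀ t : ℝ, cerfc (t:ℂ) =
      1 - (2 / (Real.sqrt Real.pi : ℂ)) * ∫ x in (0:ℝ)..t, Complex.exp (-(x:ℂ)^2) := by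
    intro t
    have h1 : ∀ x ∈ Set.uIcc (0:ℝ) t, HasDerivAt (fun x : ℝ => cerf (x:ℂ))
        ((2 / (Real.sqrt Real.pi : ℂ)) * Complex.exp (-(x:ℂ)^2)) x :=
      fun x _ => (hasDerivAt_cerf (x:ℂ)).comp_ofReal
    have h2 := intervalIntegral.integral_eq_sub_of_hasDerivAt h1
      (hint.const_mul _).intervalIntegrable
    rw [intervalIntegral.integral_const_mul] at h2
    rw [h2]
    simp [cerfc, cerf]
  have h1 := intervalIntegral_tendsto_integral_Ioi (0:ℝ) hint.integrableOn tendsto_id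
  have h2 : ∫ x in Set.Ioi (0:ℝ), Complex.exp (-(x:ℂ)^2) = (Real.sqrt Real.pi : ℂ)/2 := by
    have := integral_gaussian_Ioi 1
    rw [div_one] at this
    have e : ∀ x : ℝ, Complex.exp (-(x:ℂ)^2) = ((Real.exp (-1 * x^2) : ℝ) : ℂ) := by
      intro x; push_cast; ring_nf
    simp_rw [e]
    rw [integral_complex_ofReal, this]; push_cast; rfl
  rw [h2] at h1
  have h3 := (h1.const_mul (2 / (Real.sqrt Real.pi : ℂ))).const_sub 1
  simp_rw [h0]
  have e : 1 - (2 / (Real.sqrt Real.pi : ℂ)) * ((Real.sqrt Real.pi : ℂ)/2) = 0 := by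
    have := sqrtpi_ne
    field_simp
    ring
  rw [e] at h3
  exact h3

open Topology in
lemma cerfc_tendsto (a : ℂ) : Tendsto (fun t : ℝ => cerfc (a + (t:ℂ))) atTop (𝓝 0) := by
  have hb : ∀ t : ℝ, ‖cerfc (a + (t:ℂ)) - cerfc (t:ℂ)‖ ≤
      (‖2 / (Real.sqrt Real.pi : ℂ)‖ * (Real.exp (3 * ‖a‖^2) * Real.exp (-(1/2) * t^2))) * ‖a‖ := by
    intro t
    have := (convex_closedBall (t:ℂ) ‖a‖).norm_image_sub_le_of_norm_hasDerivWithin_le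
      (f := cerfc) (C := (‖2 / (Real.sqrt Real.pi : ℂ)‖ *
        (Real.exp (3 * ‖a‖^2) * Real.exp (-(1/2) * t^2))))
      (x := (t:ℂ)) (y := a + (t:ℂ))
      (fun x _ => (hasDerivAt_cerfc x).hasDerivWithinAt) ?_ (by simp) (by simp)
    · simpa using this
    · intro x hx
      rw [norm_neg, norm_mul]
      gcongr
      rw [Complex.norm_exp, ← Real.exp_add]
      apply Real.exp_le_exp.mpr
      have hx1 : ‖x - t‖ ≤ ‖a‖ := by simpa [dist_eq_norm] using hx
      have hx2 : (x.re - t)^2 + x.im^2 ≤ ‖a‖^2 := by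
        have e : ‖x - t‖^2 = (x.re - t)^2 + x.im^2 := by
          rw [← Complex.normSq_eq_norm_sq, Complex.normSq_apply]; simp; ring
        rw [← e]
        exact pow_le_pow_left₀ (norm_nonneg _) hx1 2
      have hre : (-x^2).re = -(x.re^2 - x.im^2) := by simp [pow_two]
      rw [hre]
      nlinarith [sq_nonneg (2 * x.re - t), sq_nonneg (x.re - t), sq_nonneg x.im]
  have hlim : Tendsto (fun t : ℝ => (‖2 / (Real.sqrt Real.pi : ℂ)‖ *
      (Real.exp (3 * ‖a‖^2) * Real.exp (-(1/2) * t^2))) * ‖a‖) atTop (𝓝 0) := by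
    have h1 : Tendsto (fun t : ℝ => -(1/2) * t^2) atTop atBot :=
      (tendsto_pow_atTop two_ne_zero).const_mul_atTop_of_neg (by norm_num)
    have h2 := (((Real.tendsto_exp_atBot.comp h1).const_mul (Real.exp (3 * ‖a‖^2))).const_mul
      ‖2 / (Real.sqrt Real.pi : ℂ)‖).mul_const ‖a‖
    simpa using h2
  have h := (squeeze_zero_norm hb hlim).add cerfc_real_tendsto
  simpa using h

lemma gauss_integral_Iic (a : ℂ) : ∫ u in Set.Iic (0:ℝ), Complex.exp (-(a-2*(u:ℂ))^2) =
    (Real.sqrt Real.pi : ℂ)/4 * cerfc a := by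
  have hl : Tendsto (fun u : ℝ => ((Real.sqrt Real.pi : ℂ)/4) * cerfc (a - 2*(u:ℂ))) atBot
      (nhds 0) := by
    have h1 : Tendsto (fun u : ℝ => -2 * u) atBot atTop :=
      tendsto_id.const_mul_atBot_of_neg (by norm_num)
    have h2 := ((cerfc_tendsto a).comp h1).const_mul ((Real.sqrt Real.pi : ℂ)/4)
    rw [mul_zero] at h2
    refine h2.congr fun u => ?_
    simp [sub_eq_add_neg]
  rw [integral_Iic_of_hasDerivAt_of_tendsto' (fun x _ => prim_deriv a x)
    (gauss_int a).integrableOn hl]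
  simp

lemma kbulk_eq (z w : ℂ) : Complex.exp (-z^2-w^2) * kbulk z w =
    (Real.sqrt Real.pi : ℂ) * ∫ u in Set.univ, Wr w z u := by
  unfold kbulk
  have e : Complex.exp (-z^2-w^2) * Complex.exp (z^2+w^2) = 1 := by
    rw [← Complex.exp_add]; simp
  rw [setIntegral_univ]
  linear_combination (Real.sqrt Real.pi : ℂ) * (∫ u, Wr w z u) * e

lemma kedge_eq (z w : ℂ) : Complex.exp (-z^2-w^2) * kedge z w =
    (Real.sqrt Real.pi : ℂ) * ∫ u in Set.Iic (0:ℝ), Wr w z u := by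
  unfold kedge
  have e : Complex.exp (-z^2-w^2) * Complex.exp (z^2+w^2) = 1 := by
    rw [← Complex.exp_add]; simp
  rw [integral_Iic_eq_integral_Iio]
  linear_combination (Real.sqrt Real.pi : ℂ) * (∫ u in Set.Iio (0:ℝ), Wr w z u) * e

lemma Wr_self (w : ℂ) (u : ℝ) : Wr w w u = 0 := by unfold Wr; ring

lemma bulk_val (w z : ℂ) : (Real.sqrt Real.pi : ℂ) *
    ∫ u in Set.univ, (-(gz w u * gz z u + fz w u * hz z u) + 2 * (gz w u * gz z u)) =
    Fsbulk z w := by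
  rw [setIntegral_univ, integral_add (fg_int_neg w z) ((gz_mul_int w z).const_mul 2),
    integral_neg, integral_eq_zero_of_hasDerivAt_of_integrable (fg_deriv w z) (fg_int w z)
      (fz_mul_int w (gz_int z)), integral_const_mul]
  simp_rw [gg_eq]
  rw [integral_const_mul, gauss_integral, ← sqrtpi_sq]
  unfold Fsbulk
  have := sqrtpi_ne
  field_simp
  ring

lemma edge_val (w z : ℂ) : (Real.sqrt Real.pi : ℂ) *
    ∫ u in Set.Iic (0:ℝ), (-(gz w u * gz z u + fz w u * hz z u) + 2 * (gz w u * gz z u)) =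
    Fsedge z w := by
  have hl := tendsto_zero_of_hasDerivAt_of_integrableOn_Iic (a := (0:ℝ))
    (fun u _ => fg_deriv w z u) (fg_int w z).integrableOn (fz_mul_int w (gz_int z)).integrableOn
  rw [integral_add (fg_int_neg w z).integrableOn ((gz_mul_int w z).const_mul 2).integrableOn,
    integral_neg, integral_Iic_of_hasDerivAt_of_tendsto' (fun u _ => fg_deriv w z u)
      (fg_int w z).integrableOn hl, integral_const_mul]
  simp_rw [gg_eq]
  rw [integral_const_mul, gauss_integral_Iic, ← sqrtpi_sq]
  unfold Fsedge fz gz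
  simp only [Complex.ofReal_zero, sub_zero]
  have := sqrtpi_ne
  have h2 := sqrt2_ne
  have e : (1/(Real.sqrt 2 : ℂ)) = (Real.sqrt 2 : ℂ) / 2 := by
    rw [div_eq_div_iff h2 two_ne_zero]; linear_combination -sqrt2_sq
  rw [e]
  field_simp
  ring

/-- Lemma 2.3(a): the bulk/edge limiting kernels solve the limiting
differential equations of the strong non-unitarity regime. -/
theorem limiting_ODE_strong (w : ℂ) :
    (Complex.exp (-w^2-w^2) * kbulk w w = 0 ∧
      ∀ z : ℂ, HasDerivAt (fun z => Complex.exp (-z^2-w^2) * kbulk z w) (Fsbulk z w) z) ∧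
    (Complex.exp (-w^2-w^2) * kedge w w = 0 ∧
      ∀ z : ℂ, HasDerivAt (fun z => Complex.exp (-z^2-w^2) * kedge z w) (Fsedge z w) z) := by
  have hb : (fun z => Complex.exp (-z^2-w^2) * kbulk z w) =
      fun z => (Real.sqrt Real.pi : ℂ) * ∫ u in Set.univ, Wr w z u := funext fun z => kbulk_eq z w
  have he : (fun z => Complex.exp (-z^2-w^2) * kedge z w) =
      fun z => (Real.sqrt Real.pi : ℂ) * ∫ u in Set.Iic (0:ℝ), Wr w z u :=
    funext fun z => kedge_eq z w
  refine ⟨⟨?_, fun z => ?_⟩, ⟨?_, fun z => ?_⟩⟩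
  · rw [kbulk_eq]; simp [Wr_self]
  · rw [hb, ← bulk_val]
    exact (Wr_integral_deriv w z _).const_mul _
  · rw [kedge_eq]; simp [Wr_self]
  · rw [he, ← edge_val]
    exact (Wr_integral_deriv w z _).const_mul _

end SI
end
end

section
/- Solution of the limiting differential equation at the singular origin (Lemma 2.3(c)). Let L > 0 be a real number with 2L a positive integer and fix w ∈ ℂ. The function z ↦ K_o(z,w) := e^{−z²−w²} κ_o(z,w) satisfies K_o(w,w) = 0 and, for every z ∈ ℂ, its complex derivative in z equals F_o(z,w) := 2 e^{−(z−w)²} P(2L,2zw) − (2√π/Γ(L)) z^{2L−1} e^{−z²} P(L+1/2,w²). -/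
open MeasureTheory Filter Finset

noncomputable section

namespace SI

/-- The two-parametric Mittag-Leffler function `E_{2,1+M}` with `M = 2L ∈ ℕ`. -/
def MLE (M : ℕ) (x : ℂ) : ℂ := ∑' k : ℕ, x ^ k / Complex.Gamma ((2*k+1+M : ℕ) : ℂ)

/-- The limiting kernel `κ_o` at the singular origin, with `M = 2L`. -/
def ko (M : ℕ) (z w : ℂ) : ℂ :=
  2 * (2*z*w) ^ M * ∫ s in (0:ℝ)..1, (s:ℂ) ^ M *
    (z * Complex.exp ((1-(s:ℂ)^2)*z^2) - w * Complex.exp ((1-(s:ℂ)^2)*w^2)) *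
    MLE M ((2*(s:ℂ)*z*w)^2)

/-- The regularised incomplete gamma function
`P(2L, x) = (x^{2L}/Γ(2L)) ∫₀¹ s^{2L-1} e^{-xs} ds` with `M = 2L ∈ ℕ`. -/
def P2L (M : ℕ) (x : ℂ) : ℂ :=
  (x ^ M / Complex.Gamma ((M : ℝ) : ℂ)) *
    ∫ s in (0:ℝ)..1, (s:ℂ) ^ (M-1) * Complex.exp (-x*(s:ℂ))

/-- `P(L+1/2, w²) = (w^{2L+1}/Γ(L+1/2)) ∫₀¹ s^{L-1/2} e^{-w²s} ds` with `M = 2L`. -/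
def PLhalf (M : ℕ) (L : ℝ) (w : ℂ) : ℂ :=
  (w ^ (M+1) / Complex.Gamma ((L+1/2 : ℝ) : ℂ)) *
    ∫ s in (0:ℝ)..1, ((s ^ (L-1/2) : ℝ) : ℂ) * Complex.exp (-w^2*(s:ℂ))

/-- The limiting inhomogeneous term `F_o` at the singular origin, with `M = 2L`. -/
def Fo (M : ℕ) (L : ℝ) (z w : ℂ) : ℂ :=
  2 * Complex.exp (-(z-w)^2) * P2L M (2*z*w)
    - (2 * (Real.sqrt Real.pi : ℂ) / Complex.Gamma ((L : ℝ) : ℂ)) * z ^ (M-1) *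
        Complex.exp (-z^2) * PLhalf M L w

def SS : ℕ → ℂ → ℂ
  | 0, t => Complex.cosh t
  | 1, t => Complex.sinh t
  | (n+2), t => SS n t - t ^ n / (n.factorial : ℂ)

lemma SS_hasSum (t : ℂ) : ∀ n : ℕ,
    HasSum (fun k : ℕ => t ^ (2*k+n) / ((2*k+n).factorial : ℂ)) (SS n t)
  | 0 => by simpa [SS] using Complex.hasSum_cosh t
  | 1 => by simpa [SS] using Complex.hasSum_sinh t
  | (n+2) => by
    have h := SS_hasSum t n
    have h2 := (hasSum_nat_add_iff' (f := fun k : ℕ => t ^ (2*k+n) / ((2*k+n).factorial : ℂ)) 1).2 h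
    have e : ∀ k : ℕ, 2 * (k+1) + n = 2*k+(n+2) := fun k => by ring
    simpa [SS, e] using h2

lemma SS_deriv (t : ℂ) : ∀ n : ℕ, HasDerivAt (SS (n+1)) (SS n t) t
  | 0 => by
    have : SS (0+1) = Complex.sinh := by funext x; simp [SS]
    rw [this]; simpa [SS] using Complex.hasDerivAt_sinh t
  | 1 => by
    have : SS (1+1) = fun x => Complex.cosh x - 1 := by funext x; simp [SS]
    rw [this]; simpa [SS] using (Complex.hasDerivAt_cosh t).sub_const 1
  | (n+2) => by
    have h := SS_deriv t n
    have e : SS (n+2+1) = fun x => SS (n+1) x - x ^ (n+1) / ((n+1).factorial : ℂ) := by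
      funext x; simp [SS]
    rw [e]
    have h2 := h.sub ((hasDerivAt_pow (n+1) t).div_const ((n+1).factorial : ℂ))
    refine h2.congr_deriv ?_
    have : (n.factorial : ℂ) ≠ 0 := by exact_mod_cast n.factorial_ne_zero
    have h1 : (n : ℂ) + 1 ≠ 0 := by exact_mod_cast n.succ_ne_zero
    simp only [SS, Nat.factorial_succ]
    push_cast
    try simp only [Nat.add_sub_cancel]
    field_simp

lemma SS_zero : ∀ n : ℕ, SS (n+1) 0 = 0
  | 0 => by simp [SS]
  | 1 => by simp [SS]
  | (n+2) => by
    have := SS_zero n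
    simp [SS] at this ⊢
    exact this

lemma SS_cont (n : ℕ) : Continuous (SS n) := by
  match n with
  | 0 =>
    have : SS 0 = Complex.cosh := by funext x; simp [SS]
    rw [this]; exact Complex.continuous_cosh
  | (n+1) => exact continuous_iff_continuousAt.2 fun t => (SS_deriv t n).continuousAt

lemma MLE_SS (M : ℕ) (t : ℂ) : t ^ M * MLE M (t^2) = SS M t := by
  rw [← (SS_hasSum t M).tsum_eq, MLE, ← tsum_mul_left]
  congr 1; funext k
  have : ((2*k+1+M : ℕ) : ℂ) = ((2*k+M : ℕ) : ℂ) + 1 := by push_cast; ring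
  rw [this, Complex.Gamma_nat_eq_factorial, ← pow_mul, pow_add]
  ring

lemma P2L_SS (n : ℕ) (t : ℂ) :
    P2L (n+1) t = Complex.exp (-t) * (SS (n+1) t + SS (n+2) t) := by
  have hn : (n.factorial : ℂ) ≠ 0 := by exact_mod_cast n.factorial_ne_zero
  have hd : ∀ s : ℝ, HasDerivAt
      (fun s : ℝ => Complex.exp (-t*(s:ℂ)) * (SS (n+1) (t*(s:ℂ)) + SS (n+2) (t*(s:ℂ))))
      (t ^ (n+1) / (n.factorial : ℂ) * ((s:ℂ)^n * Complex.exp (-t*(s:ℂ)))) s := by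
    intro s
    have h0 : HasDerivAt (fun s : ℝ => (s:ℂ)) 1 s := Complex.ofRealCLM.hasDerivAt
    have h1 := (h0.const_mul (-t)).cexp
    have h2 := (SS_deriv (t*(s:ℂ)) n).comp s (h0.const_mul t)
    have h3 := (SS_deriv (t*(s:ℂ)) (n+1)).comp s (h0.const_mul t)
    refine (h1.mul (h2.add h3)).congr_deriv ?_
    simp only [SS, Function.comp, Pi.add_apply]
    field_simp
    ring
  have := intervalIntegral.integral_eq_sub_of_hasDerivAt (a := 0) (b := 1) (fun s _ => hd s)
    (Continuous.intervalIntegrable (by fun_prop) _ _)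
  rw [intervalIntegral.integral_const_mul] at this
  simp only [P2L, Nat.add_sub_cancel]
  rw [Complex.ofReal_natCast]
  push_cast
  rw [Complex.Gamma_nat_eq_factorial, this]
  simp [SS_zero]

lemma PLhalf_eq (L : ℝ) (n : ℕ) (hM : 2*L = ((n+1 : ℕ) : ℝ)) (w : ℂ) :
    ∫ s in (0:ℝ)..1, ((s ^ (L-1/2) : ℝ) : ℂ) * Complex.exp (-w^2*(s:ℂ)) =
    ∫ s in (0:ℝ)..1, 2 * (s:ℂ)^(n+1) * Complex.exp (-(s:ℂ)^2*w^2) := by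
  have hL : L - 1/2 = n/2 := by push_cast at hM; linarith
  have hc : Continuous fun s : ℝ => ((s ^ (L-1/2) : ℝ) : ℂ) * Complex.exp (-w^2*(s:ℂ)) := by
    have : Continuous fun s : ℝ => s ^ (L-1/2) :=
      Real.continuous_rpow_const (by rw [hL]; positivity)
    fun_prop
  have h := intervalIntegral.integral_deriv_smul_comp (a := 0) (b := 1) (f := fun s : ℝ => s^2)
    (f' := fun s => 2*s) (g := fun s : ℝ => ((s ^ (L-1/2) : ℝ) : ℂ) * Complex.exp (-w^2*(s:ℂ)))
    (fun x _ => by simpa using hasDerivAt_pow 2 x) (by fun_prop) hc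
  simp only [one_pow, ne_eq, OfNat.ofNat_ne_zero, not_false_eq_true, zero_pow] at h
  rw [← h]
  apply intervalIntegral.integral_congr
  intro s hs
  rw [Set.uIcc_of_le zero_le_one] at hs
  have : (s^2) ^ (L-1/2) = s^n := by
    rw [hL, ← Real.rpow_natCast s 2, ← Real.rpow_mul hs.1, ← Real.rpow_natCast]
    congr 1; push_cast; ring
  simp only [Function.comp, this, Complex.real_smul]
  push_cast
  rw [show -w^2*(s:ℂ)^2 = -(s:ℂ)^2*w^2 by ring]
  ring

lemma Gamma_dup (L : ℝ) (n : ℕ) (hM : 2*L = ((n+1 : ℕ) : ℝ)) :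
    Complex.Gamma ((L : ℝ) : ℂ) * Complex.Gamma ((L+1/2 : ℝ) : ℂ) * 2 ^ n
      = (n.factorial : ℂ) * (Real.sqrt Real.pi : ℂ) := by
  have h := Complex.Gamma_mul_Gamma_add_half (L : ℂ)
  have e : (2 * (L:ℂ)) = (n:ℂ) + 1 := by
    have : ((2*L : ℝ) : ℂ) = (((n+1 : ℕ) : ℝ) : ℂ) := by rw [hM]
    push_cast at this; exact this
  rw [e, Complex.Gamma_nat_eq_factorial, show (1 - ((n:ℂ)+1)) = -(n:ℂ) by ring, Complex.cpow_neg,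
    Complex.cpow_natCast] at h
  push_cast
  rw [h]
  field_simp

lemma deriv_under (F F' : ℂ → ℝ → ℂ) (hF : Continuous (Function.uncurry F))
    (hF' : Continuous (Function.uncurry F')) (hd : ∀ z s, HasDerivAt (fun z => F z s) (F' z s) z)
    (z : ℂ) : HasDerivAt (fun z => ∫ s in (0:ℝ)..1, F z s) (∫ s in (0:ℝ)..1, F' z s) z := by
  obtain ⟨C, hC⟩ := ((isCompact_closedBall z 1).prod (isCompact_Icc (a := (0:ℝ)) (b := 1))).exists_bound_of_continuousOn
    hF'.continuousOn
  refine (intervalIntegral.hasDerivAt_integral_of_dominated_loc_of_deriv_le (bound := fun _ => C)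
    (Metric.closedBall_mem_nhds z one_pos) ?_ ?_ ?_ ?_ ?_ ?_).2
  · exact .of_forall fun x => (hF.comp (by fun_prop : Continuous fun s : ℝ => (x, s))).aestronglyMeasurable
  · exact (hF.comp (by fun_prop : Continuous fun s : ℝ => (z, s))).intervalIntegrable _ _
  · exact (hF'.comp (by fun_prop : Continuous fun s : ℝ => (z, s))).aestronglyMeasurable
  · refine .of_forall fun t ht x hx => ?_
    rw [Set.uIoc_of_le zero_le_one] at ht
    exact hC (x, t) ⟨hx, ht.1.le, ht.2⟩
  · simp
  · exact .of_forall fun t _ x _ => hd x t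

def kk (n : ℕ) (w z : ℂ) (s : ℝ) : ℂ :=
  2 * (z * Complex.exp (-(s:ℂ)^2*z^2-w^2) - w * Complex.exp (-(s:ℂ)^2*w^2-z^2)) *
    SS (n+1) (2*(s:ℂ)*z*w)

def kk' (n : ℕ) (w z : ℂ) (s : ℝ) : ℂ :=
  2 * ((1 - 2*(s:ℂ)^2*z^2) * Complex.exp (-(s:ℂ)^2*z^2-w^2)
    + 2*z*w * Complex.exp (-(s:ℂ)^2*w^2-z^2)) * SS (n+1) (2*(s:ℂ)*z*w)
  + 2 * (z * Complex.exp (-(s:ℂ)^2*z^2-w^2) - w * Complex.exp (-(s:ℂ)^2*w^2-z^2)) *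
    (2*(s:ℂ)*w*SS n (2*(s:ℂ)*z*w))

lemma kk_deriv (n : ℕ) (w z : ℂ) (s : ℝ) :
    HasDerivAt (fun z => kk n w z s) (kk' n w z s) z := by
  have h0 := hasDerivAt_id z
  have hz2 := hasDerivAt_pow 2 z
  have h1 := ((hz2.const_mul (-(s:ℂ)^2)).sub_const (w^2)).cexp
  have h2 := (hz2.const_sub (-(s:ℂ)^2*w^2)).cexp
  have h3 := (SS_deriv (2*(s:ℂ)*z*w) n).comp z ((h0.const_mul (2*(s:ℂ))).mul_const w)
  refine ((((h0.mul h1).sub (h2.const_mul w)).const_mul 2).mul h3).congr_deriv ?_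
  simp only [kk', id, Function.comp, Pi.mul_apply, Pi.sub_apply]
  push_cast
  ring

lemma kk_int (n : ℕ) (w z : ℂ) : ∫ s in (0:ℝ)..1, kk' n w z s =
    2 * Complex.exp (-z^2-w^2) * (SS (n+1) (2*z*w) + SS (n+2) (2*z*w))
    - 2 * Complex.exp (-z^2) * (2*z)^n / (n.factorial : ℂ) * w^(n+2) *
      ∫ s in (0:ℝ)..1, 2 * (s:ℂ)^(n+1) * Complex.exp (-(s:ℂ)^2*w^2) := by
  have hn : (n.factorial : ℂ) ≠ 0 := by exact_mod_cast n.factorial_ne_zero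
  have hS := SS_cont n
  have hS1 := SS_cont (n+1)
  have hd : ∀ s : ℝ, HasDerivAt
      (fun s : ℝ => 2 * (s:ℂ) * Complex.exp (-(s:ℂ)^2*z^2-w^2) * SS (n+1) (2*(s:ℂ)*z*w)
        + 2 * Complex.exp (-(s:ℂ)^2*w^2-z^2) * SS (n+2) (2*(s:ℂ)*z*w))
      (kk' n w z s + 2 * Complex.exp (-z^2) * (2*z)^n / (n.factorial : ℂ) * w^(n+2) *
        (2 * (s:ℂ)^(n+1) * Complex.exp (-(s:ℂ)^2*w^2))) s := by
    intro s
    have h0 : HasDerivAt (fun s : ℝ => (s:ℂ)) 1 s := Complex.ofRealCLM.hasDerivAt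
    have hz2 := h0.pow 2
    have h1 := ((hz2.neg.mul_const (z^2)).sub_const (w^2)).cexp
    have h2 := ((hz2.neg.mul_const (w^2)).sub_const (z^2)).cexp
    have h3 := (SS_deriv (2*(s:ℂ)*z*w) n).comp s (((h0.const_mul 2).mul_const z).mul_const w)
    have h4 := (SS_deriv (2*(s:ℂ)*z*w) (n+1)).comp s (((h0.const_mul 2).mul_const z).mul_const w)
    refine ((((h0.const_mul 2).mul h1).mul h3).add ((h2.const_mul 2).mul h4)).congr_deriv ?_
    simp only [kk', SS, Function.comp, Pi.mul_apply, Pi.neg_apply, Pi.pow_apply]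
    rw [sub_eq_add_neg (-(s:ℂ)^2*w^2), Complex.exp_add]
    field_simp
    push_cast
    ring
  have hk : Continuous (kk' n w z) := by unfold kk'; fun_prop
  have := intervalIntegral.integral_eq_sub_of_hasDerivAt (a := 0) (b := 1) (fun s _ => hd s)
    (Continuous.intervalIntegrable (by fun_prop) _ _)
  rw [intervalIntegral.integral_add (hk.intervalIntegrable _ _)
    (Continuous.intervalIntegrable (by fun_prop) _ _), intervalIntegral.integral_const_mul] at this
  rw [eq_sub_iff_add_eq, this]
  simp only [Complex.ofReal_one, Complex.ofReal_zero, mul_zero, zero_mul, SS_zero, mul_one, one_pow]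
  rw [show (-1*w^2-z^2 : ℂ) = -z^2-w^2 by ring, show (-1*z^2-w^2 : ℂ) = -z^2-w^2 by ring]
  ring

lemma ko_kk (n : ℕ) (w z : ℂ) :
    Complex.exp (-z^2-w^2) * ko (n+1) z w = ∫ s in (0:ℝ)..1, kk n w z s := by
  rw [ko, ← mul_assoc, ← intervalIntegral.integral_const_mul]
  congr 1; funext s
  rw [kk, ← MLE_SS, show (-(s:ℂ)^2*z^2-w^2) = (-z^2-w^2) + (1-(s:ℂ)^2)*z^2 by ring,
    show (-(s:ℂ)^2*w^2-z^2) = (-z^2-w^2) + (1-(s:ℂ)^2)*w^2 by ring, Complex.exp_add, Complex.exp_add]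
  ring

/-- Lemma 2.3(c): the Mittag-Leffler kernel solves the limiting
differential equation at the singular origin (`2L = M` a positive integer). -/
theorem limiting_ODE_origin (L : ℝ) (M : ℕ) (hL : 0 < L) (hM : 2*L = (M : ℝ))
    (hM1 : 1 ≤ M) (w : ℂ) :
    Complex.exp (-w^2-w^2) * ko M w w = 0 ∧
    ∀ z : ℂ, HasDerivAt (fun z => Complex.exp (-z^2-w^2) * ko M z w) (Fo M L z w) z := by
  obtain ⟨n, rfl⟩ : ∃ n, M = n+1 := ⟨M-1, by omega⟩
  constructor
  · simp [ko]
  · intro z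
    have hS := SS_cont n
    have hS1 := SS_cont (n+1)
    have h := deriv_under (kk n w) (kk' n w) (by unfold kk Function.uncurry; fun_prop)
      (by unfold kk' Function.uncurry; fun_prop) (kk_deriv n w) z
    simp only [ko_kk]
    refine h.congr_deriv ?_
    rw [kk_int, Fo, P2L_SS, PLhalf, PLhalf_eq L n hM]
    have hg := Gamma_dup L n hM
    have hn : (n.factorial : ℂ) ≠ 0 := by exact_mod_cast n.factorial_ne_zero
    have g1 : Complex.Gamma ((L : ℝ) : ℂ) ≠ 0 := by
      rw [Complex.Gamma_ofReal]; exact_mod_cast (Real.Gamma_pos_of_pos hL).ne'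
    have g2 : Complex.Gamma ((L+1/2 : ℝ) : ℂ) ≠ 0 := by
      rw [Complex.Gamma_ofReal]; exact_mod_cast (Real.Gamma_pos_of_pos (by linarith)).ne'
    generalize Complex.Gamma ((L : ℝ) : ℂ) = a at *
    generalize Complex.Gamma ((L+1/2 : ℝ) : ℂ) = b at *
    generalize (∫ s in (0:ℝ)..1, 2 * (s:ℂ)^(n+1) * Complex.exp (-(s:ℂ)^2*w^2)) = I
    have hk : (2:ℂ)^n / (n.factorial : ℂ) = (Real.sqrt Real.pi : ℂ) / (a*b) := by
      field_simp
      linear_combination hg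
    rw [show -(z-w)^2 = (-z^2-w^2) + 2*z*w by ring, Complex.exp_add]
    have he : Complex.exp (2*z*w) * Complex.exp (-(2*z*w)) = 1 := by
      rw [← Complex.exp_add]; simp
    simp only [Nat.add_sub_cancel]
    rw [mul_pow]
    linear_combination (-2 * Complex.exp (-z^2-w^2) * (SS (n+1) (2*z*w) + SS (n+2) (2*z*w))) * he
      - (2 * Complex.exp (-z^2) * z^n * w^(n+2) * I) * hk

end SI
end
end

section
/- Kernel convergence at the singular origin (equation (2.15), case (c)). Under the singular-origin setup with 2L a positive integer and zooming point p = 0, as N → ∞ the rescaled kernel κ̃_N(z,w) converges to e^{−z²−w²} κ_o(z,w) uniformly for (z,w) in compact subsets of ℂ × ℂ. -/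
open MeasureTheory Filter Finset

noncomputable section

namespace SI

/-- The kernel `G_N(ζ,η)` built from the skew-orthogonal polynomials of the
symplectic induced spherical ensemble (all powers are principal-branch `cpow`s,
which agree with the integer powers whenever `2L` is a nonnegative integer). -/
def GK (N : ℕ) (n L : ℝ) (ζ η : ℂ) : ℂ :=
  ((Real.pi : ℂ) * Complex.Gamma ((2*n+2*L+2 : ℝ) : ℂ) / (2:ℂ) ^ ((2*n+2*L+1 : ℝ) : ℂ)) *
  ∑ k ∈ range N, ∑ l ∈ range (k+1),
    ζ ^ ((2*k+2*L+1 : ℝ) : ℂ) * η ^ ((2*l+2*L : ℝ) : ℂ) /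
      (Complex.Gamma ((k+L+3/2 : ℝ) : ℂ) * Complex.Gamma ((n-k : ℝ) : ℂ) *
       Complex.Gamma ((n-l+1/2 : ℝ) : ℂ) * Complex.Gamma ((l+L+1 : ℝ) : ℂ))

/-- The skew-symmetric kernel `κ̂_N(ζ,η) = G_N(ζ,η) - G_N(η,ζ)`. -/
def KK (N : ℕ) (n L : ℝ) (ζ η : ℂ) : ℂ := GK N n L ζ η - GK N n L η ζ

/-- The density value `δ = ((n+L)/N)(1+p²)⁻²`. -/
def dlt (N : ℕ) (n L p : ℝ) : ℝ := ((n+L)/N) * (1+p^2)^(-2 : ℝ)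

/-- `√(Nδ)`. -/
def sc (N : ℕ) (n L p : ℝ) : ℝ := Real.sqrt (N * dlt N n L p)

/-- The rescaled kernel `κ̃_N(z,w)`. -/
def resc (N : ℕ) (n L p : ℝ) (z w : ℂ) : ℂ :=
  (((1+p^2) ^ (-3 : ℝ) : ℝ) : ℂ) * (((N * dlt N n L p) ^ (-(3/2) : ℝ) : ℝ) : ℂ) *
  ((1 + ((p:ℂ) + z / (sc N n L p : ℂ))^2) * (1 + ((p:ℂ) + w / (sc N n L p : ℂ))^2))
      ^ ((-(n+L-1/2) : ℝ) : ℂ) *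
  KK N n L ((p:ℂ) + z / (sc N n L p : ℂ)) ((p:ℂ) + w / (sc N n L p : ℂ))

/-- The admissible system sizes in the singular-origin regime:
positive `N` for which `n = (b+1)N` is an integer. -/
def Ssing (b : ℝ) : Set ℕ :=
  {N | 0 < N ∧ ∃ nm : ℕ, (nm : ℝ) = (b+1)*N}


lemma gr_upper (x a : ℝ) (hx : 0 < x) (ha : 0 ≤ a) :
    Real.Gamma (x+a) ≤ Real.Gamma x * (x+a)^a := by
  rcases ha.eq_or_lt with rfl | ha
  · simp
  have h := Real.convexOn_log_Gamma.slope_mono_adjacent (x := x) (y := x+a) (z := x+a+1)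
    (by simpa using hx) (by simp; positivity) (by linarith) (by linarith)
  simp only [Function.comp] at h
  have hg := Real.Gamma_pos_of_pos hx
  have hg2 := Real.Gamma_pos_of_pos (show 0 < x+a by positivity)
  rw [Real.Gamma_add_one (by positivity), Real.log_mul (by positivity) hg2.ne'] at h
  have e1 : x + a - x = a := by ring
  have e2 : x + a + 1 - (x+a) = 1 := by ring
  rw [e1, e2, div_one, div_le_iff₀ ha] at h
  rw [← Real.log_le_log_iff hg2 (by positivity), Real.log_mul hg.ne' (by positivity),
    Real.log_rpow (by positivity)]
  linarith

lemma gr_lower (x a : ℝ) (hx : 1 < x) (ha : 0 ≤ a) :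
    Real.Gamma x * (x-1)^a ≤ Real.Gamma (x+a) := by
  rcases ha.eq_or_lt with rfl | ha
  · simp
  have hx1 : 0 < x - 1 := by linarith
  have h := Real.convexOn_log_Gamma.slope_mono_adjacent (x := x-1) (y := x) (z := x+a)
    (by simpa using hx) (by simp; positivity) (by linarith) (by linarith)
  simp only [Function.comp] at h
  have hg := Real.Gamma_pos_of_pos hx1
  have hg3 := Real.Gamma_pos_of_pos (show 0 < x by positivity)
  have hg2 := Real.Gamma_pos_of_pos (show 0 < x+a by positivity)
  have e0 : Real.Gamma x = (x-1) * Real.Gamma (x-1) := by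
    rw [← Real.Gamma_add_one hx1.ne']; ring_nf
  have e1 : x + a - x = a := by ring
  have e2 : x - (x-1) = 1 := by ring
  have e3 : Real.log (Real.Gamma x) = Real.log (x-1) + Real.log (Real.Gamma (x-1)) := by
    rw [e0, Real.log_mul hx1.ne' hg.ne']
  rw [e1, e2, div_one, le_div_iff₀ ha] at h
  rw [← Real.log_le_log_iff (by positivity) hg2, Real.log_mul hg3.ne' (by positivity),
    Real.log_rpow (by positivity)]
  have : Real.log (x-1) = Real.log (Real.Gamma x) - Real.log (Real.Gamma (x-1)) := by linarith
  rw [this]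
  linarith

lemma beta_int (i : ℕ) : ∀ a : ℕ, ∫ s in (0:ℝ)..1, s^a * (1-s^2)^i =
    Real.Gamma ((a+1)/2) * (i.factorial : ℝ) / (2 * Real.Gamma ((a+1)/2 + i + 1)) := by
  induction i with
  | zero =>
    intro a
    have h := Real.Gamma_add_one (s := ((a:ℝ)+1)/2) (by positivity)
    have hg := Real.Gamma_pos_of_pos (show 0 < ((a:ℝ)+1)/2 by positivity)
    simp [h]
    field_simp
  | succ i ih =>
    intro a
    have : ∀ s : ℝ, s^a * (1-s^2)^(i+1) = s^a * (1-s^2)^i - s^(a+2) * (1-s^2)^i := by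
      intro s; ring
    simp_rw [this]
    rw [intervalIntegral.integral_sub, ih, ih]
    · have hc : 0 < ((a:ℝ)+1)/2 := by positivity
      have e : (((a+2:ℕ):ℝ)+1)/2 = ((a:ℝ)+1)/2 + 1 := by push_cast; ring
      rw [e, Nat.factorial_succ]
      generalize ((a:ℝ)+1)/2 = c at *
      have e2 : c + 1 + i + 1 = (c + i + 1) + 1 := by ring
      have e3 : c + ((i+1:ℕ):ℝ) + 1 = (c + i + 1) + 1 := by push_cast; ring
      have hp : 0 < c + i + 1 := by positivity
      rw [e2, e3, Real.Gamma_add_one hp.ne', Real.Gamma_add_one hc.ne']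
      have hg := Real.Gamma_pos_of_pos hp
      push_cast
      field_simp
      ring
    · exact (by fun_prop : Continuous _).intervalIntegrable _ _
    · exact (by fun_prop : Continuous _).intervalIntegrable _ _

lemma summ_gamma (C s : ℝ) (hC : 0 < C) (hs : 0 < s) :
    Summable (fun k : ℕ => C^k / Real.Gamma (k+s)) := by
  have hg : ∀ k : ℕ, 0 < Real.Gamma (k+s) := fun k => Real.Gamma_pos_of_pos (by positivity)
  refine summable_of_ratio_test_tendsto_lt_one (l := 0) (by norm_num) ?_ ?_
  · exact Eventually.of_forall fun k => (div_pos (by positivity) (hg k)).ne'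
  · have : Tendsto (fun k : ℕ => C / ((k:ℝ)+s)) atTop (nhds 0) :=
      Tendsto.div_atTop tendsto_const_nhds
        (tendsto_atTop_add_const_right _ _ tendsto_natCast_atTop_atTop)
    refine this.congr fun k => ?_
    have := hg k
    have e : ((k+1:ℕ):ℝ) + s = (k + s) + 1 := by push_cast; ring
    have hk : (0:ℝ) < k + s := by positivity
    rw [e, Real.Gamma_add_one hk.ne', Real.norm_of_nonneg (by positivity),
      Real.norm_of_nonneg (by positivity)]
    field_simp
    ring

def cc (L : ℝ) (p : ℕ × ℕ) : ℝ :=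
  √Real.pi / (Real.Gamma (p.1+p.2+L+3/2) * Real.Gamma (p.2+L+1))

def mon (M : ℕ) (z w : ℂ) (p : ℕ × ℕ) : ℂ := z^(2*(p.1+p.2)+M+1) * w^(2*p.2+M)

lemma coef_id (L : ℝ) (M : ℕ) (hM : 2*L = (M : ℝ)) (p : ℕ × ℕ) :
    2 * 2^M * 4^p.2 / ((p.1.factorial : ℝ) * ((2*p.2+M).factorial : ℝ)) *
      (∫ s in (0:ℝ)..1, s^(M+2*p.2) * (1-s^2)^p.1) = cc L p := by
  obtain ⟨i, j⟩ := p
  rw [beta_int]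
  have hL : 0 ≤ L := by have : (0:ℝ) ≤ M := by positivity
                        linarith
  have e1 : (((M+2*j:ℕ):ℝ)+1)/2 = j + L + 1/2 := by push_cast; rw [← hM]; ring
  have e2 : (j:ℝ) + L + 1/2 + i + 1 = i + j + L + 3/2 := by ring
  simp only [cc]
  rw [e1, e2]
  have h := Real.Gamma_mul_Gamma_add_half ((j:ℝ)+L+1/2)
  have e3 : (j:ℝ)+L+1/2+1/2 = j+L+1 := by ring
  have e4 : 2*((j:ℝ)+L+1/2) = ((2*j+M:ℕ):ℝ) + 1 := by push_cast; rw [← hM]; ring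
  have e5 : (1:ℝ) - (((2*j+M:ℕ):ℝ) + 1) = -((2*j+M:ℕ):ℝ) := by ring
  rw [e3, e4, Real.Gamma_nat_eq_factorial, e5, Real.rpow_neg (by norm_num), Real.rpow_natCast] at h
  have g1 := Real.Gamma_pos_of_pos (show 0 < (j:ℝ)+L+1/2 by positivity)
  have g2 := Real.Gamma_pos_of_pos (show 0 < (j:ℝ)+L+1 by positivity)
  have g3 := Real.Gamma_pos_of_pos (show 0 < (i:ℝ)+j+L+3/2 by positivity)
  have f1 : (0:ℝ) < i.factorial := by positivity
  have f2 : (0:ℝ) < (2*j+M).factorial := by positivity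
  have e6 : (2:ℝ)^(2*j+M) = 4^j * 2^M := by rw [pow_add, pow_mul]; norm_num
  rw [e6] at h
  generalize Real.Gamma ((j:ℝ)+L+1/2) = G1 at *
  generalize Real.Gamma ((j:ℝ)+L+1) = G2 at *
  field_simp at h ⊢
  linear_combination h

lemma hs_mul {f g : ℕ → ℂ} {s t : ℂ} (hf : HasSum f s) (hg : HasSum g t)
    (hg2 : Summable fun x => ‖g x‖) : HasSum (fun p : ℕ × ℕ => f p.1 * g p.2) (s*t) :=
  HasSum.mul hf hg (summable_mul_of_summable_norm hf.summable.norm hg2)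

set_option maxHeartbeats 400000 in
lemma hasSum_ko (L : ℝ) (M : ℕ) (hM : 2*L = (M : ℝ)) (z w : ℂ) :
    HasSum (fun p : ℕ × ℕ => (cc L p : ℂ) * mon M z w p - (cc L p : ℂ) * mon M w z p)
      (ko M z w) := by
  unfold ko
  have key : HasSum (fun p : ℕ × ℕ => ∫ s in (0:ℝ)..1, ((s:ℂ)^M *
      (z * (((1-(s:ℂ)^2)*z^2)^p.1 / (p.1.factorial : ℂ)) -
        w * (((1-(s:ℂ)^2)*w^2)^p.1 / (p.1.factorial : ℂ)))) *
        (((2*(s:ℂ)*z*w)^2)^p.2 / ((2*p.2+M).factorial : ℂ)))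
      (∫ s in (0:ℝ)..1, (s:ℂ) ^ M *
    (z * Complex.exp ((1-(s:ℂ)^2)*z^2) - w * Complex.exp ((1-(s:ℂ)^2)*w^2)) *
    MLE M ((2*(s:ℂ)*z*w)^2)) := by
    have sE : ∀ x : ℝ, Summable (fun i : ℕ => x^i / (i.factorial : ℝ)) :=
      fun x => Real.summable_pow_div_factorial x
    have hfac : ∀ j : ℕ, (j.factorial : ℝ) ≤ (2*j+M).factorial := fun j => by
      exact_mod_cast Nat.factorial_le (by omega)
    refine intervalIntegral.hasSum_integral_of_dominated_convergence
      (fun (p : ℕ × ℕ) _ => (‖z‖ * ((‖z‖^2)^p.1 / (p.1.factorial : ℝ)) +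
        ‖w‖ * ((‖w‖^2)^p.1 / (p.1.factorial : ℝ))) *
        (((2*‖z‖*‖w‖)^2)^p.2 / (p.2.factorial : ℝ))) ?_ ?_ ?_ ?_ ?_
    · intro p
      exact (by fun_prop : Continuous _).aestronglyMeasurable
    · intro p
      refine Eventually.of_forall fun s hs => ?_
      rw [Set.uIoc_of_le zero_le_one] at hs
      have hs0 : ‖(s:ℂ)‖ ≤ 1 := by
        rw [Complex.norm_real, Real.norm_of_nonneg hs.1.le]; exact hs.2
      have hs1 : ‖(1:ℂ)-(s:ℂ)^2‖ ≤ 1 := by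
        have : (1:ℂ)-(s:ℂ)^2 = ((1-s^2:ℝ):ℂ) := by push_cast; ring
        rw [this, Complex.norm_real, Real.norm_of_nonneg (by nlinarith [hs.1, hs.2])]
        nlinarith [hs.1]
      have hb : ∀ u : ℂ, ‖u * (((1-(s:ℂ)^2)*u^2)^p.1 / (p.1.factorial : ℂ))‖ ≤
          ‖u‖ * ((‖u‖^2)^p.1 / (p.1.factorial : ℝ)) := by
        intro u
        rw [norm_mul, norm_div, norm_pow, norm_mul, norm_pow, Complex.norm_natCast]
        gcongr
        exact mul_le_of_le_one_left (by positivity) hs1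
      rw [norm_mul, norm_mul]
      gcongr
      · calc _ ≤ 1 * ‖_‖ := by
              gcongr
              rw [norm_pow]; exact pow_le_one₀ (norm_nonneg _) hs0
          _ ≤ _ := by
              rw [one_mul]
              exact (norm_sub_le _ _).trans (add_le_add (hb z) (hb w))
      · rw [norm_div, norm_pow, norm_pow, norm_mul, norm_mul, norm_mul, Complex.norm_natCast]
        gcongr
        · simp only [Complex.norm_ofNat]
          exact mul_le_of_le_one_right (by norm_num) hs0
        · omega
    · refine Eventually.of_forall fun s hs => ?_
      exact Summable.mul_of_nonneg
        (f := fun i : ℕ => (‖z‖ * ((‖z‖^2)^i / (i.factorial : ℝ)) +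
        ‖w‖ * ((‖w‖^2)^i / (i.factorial : ℝ)))) (g := fun j : ℕ =>
        (((2*‖z‖*‖w‖)^2)^j / (j.factorial : ℝ)))
        (((sE _).mul_left _).add ((sE _).mul_left _)) (sE _)
        (fun i => by positivity) (fun i => by positivity)
    · exact intervalIntegrable_const
    · refine Eventually.of_forall fun s hs => ?_
      have hexp : ∀ u : ℂ, HasSum (fun i : ℕ => u^i / (i.factorial : ℂ)) (Complex.exp u) := by
        intro u
        rw [Complex.exp_eq_exp_ℂ]
        exact NormedSpace.expSeries_div_hasSum_exp u
      have hexpn : ∀ u : ℂ, Summable (fun i : ℕ => ‖u^i / (i.factorial : ℂ)‖) := by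
        intro u
        simpa using sE ‖u‖
      have hMn : ∀ u : ℂ, Summable (fun j : ℕ => ‖u^j / ((2*j+M).factorial : ℂ)‖) := by
        intro u
        refine Summable.of_nonneg_of_le (fun _ => norm_nonneg _) (fun j => ?_) (sE ‖u‖)
        rw [norm_div, norm_pow, Complex.norm_natCast]
        gcongr
        omega
      have hML : ∀ u : ℂ, HasSum (fun j : ℕ => u^j / ((2*j+M).factorial : ℂ)) (MLE M u) := by
        intro u
        have e : MLE M u = ∑' j : ℕ, u^j / ((2*j+M).factorial : ℂ) := by
          unfold MLE
          congr 1; ext j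
          have : ((2*j+1+M:ℕ):ℂ) = ((2*j+M:ℕ):ℂ) + 1 := by push_cast; ring
          rw [this, Complex.Gamma_nat_eq_factorial]
        rw [e]
        exact (hMn u).of_norm.hasSum
      have h1 : HasSum (fun i : ℕ => (s:ℂ)^M * (z * (((1-(s:ℂ)^2)*z^2)^i / (i.factorial : ℂ)) -
        w * (((1-(s:ℂ)^2)*w^2)^i / (i.factorial : ℂ)))) ((s:ℂ) ^ M *
    (z * Complex.exp ((1-(s:ℂ)^2)*z^2) - w * Complex.exp ((1-(s:ℂ)^2)*w^2))) :=
        (((hexp ((1-(s:ℂ)^2)*z^2)).mul_left z).sub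
        ((hexp ((1-(s:ℂ)^2)*w^2)).mul_left w)).mul_left ((s:ℂ)^M)
      have h3 := hs_mul h1 (hML ((2*(s:ℂ)*z*w)^2)) (hMn ((2*(s:ℂ)*z*w)^2))
      exact h3
  have key2 := key.mul_left (2 * (2*z*w)^M)
  refine Eq.mp (congrArg (fun f => HasSum f _) (funext fun p => ?_)) key2
  symm
  have hint : ∀ s : ℝ, ((s:ℂ)^M *
      (z * (((1-(s:ℂ)^2)*z^2)^p.1 / (p.1.factorial : ℂ)) -
        w * (((1-(s:ℂ)^2)*w^2)^p.1 / (p.1.factorial : ℂ)))) *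
        (((2*(s:ℂ)*z*w)^2)^p.2 / ((2*p.2+M).factorial : ℂ)) =
      ((s^(M+2*p.2) * (1-s^2)^p.1 : ℝ) : ℂ) * ((z^(2*p.1+1) - w^(2*p.1+1)) * (2*z*w)^(2*p.2) /
        ((p.1.factorial : ℂ) * ((2*p.2+M).factorial : ℂ))) := by
    intro s
    push_cast
    have f1 : (p.1.factorial : ℂ) ≠ 0 := by exact_mod_cast p.1.factorial_ne_zero
    have f2 : ((2*p.2+M).factorial : ℂ) ≠ 0 := by exact_mod_cast (2*p.2+M).factorial_ne_zero
    have h4 : ((2*(s:ℂ)*z*w)^2)^p.2 = (s:ℂ)^(2*p.2) * (2*z*w)^(2*p.2) := by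
      rw [← pow_mul, ← mul_pow]; congr 1; ring
    rw [h4]
    simp only [mul_pow (1-(s:ℂ)^2)]
    generalize (1-(s:ℂ)^2)^p.1 = t
    generalize (2*z*w)^(2*p.2) = t2
    field_simp
    ring
  simp_rw [hint]
  rw [intervalIntegral.integral_mul_const, intervalIntegral.integral_ofReal, ← coef_id L M hM]
  push_cast
  have f1 : (p.1.factorial : ℂ) ≠ 0 := by exact_mod_cast p.1.factorial_ne_zero
  have f2 : ((2*p.2+M).factorial : ℂ) ≠ 0 := by exact_mod_cast (2*p.2+M).factorial_ne_zero
  simp only [mon]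
  generalize ((∫ s in (0:ℝ)..1, s^(M+2*p.2) * (1-s^2)^p.1 : ℝ) : ℂ) = I
  have e4 : (4:ℂ)^p.2 = 2^(2*p.2) := by rw [pow_mul]; norm_num
  rw [e4]
  field_simp
  ring

def RR (m a e : ℝ) : ℝ := Real.Gamma (m+e) / (Real.Gamma (m+e-a) * m^a)

lemma RR_bound (m a e : ℝ) (hm : 1 ≤ m) (ha : 0 ≤ a) (hx : 0 < m+e-a) (he : e ≤ 2) :
    |RR m a e| ≤ 3^a := by
  have h := gr_upper (m+e-a) a hx ha
  have e1 : m+e-a+a = m+e := by ring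
  rw [e1] at h
  have g1 := Real.Gamma_pos_of_pos hx
  have hme : 0 < m + e := by linarith
  have g2 := Real.Gamma_pos_of_pos hme
  have hm0 : 0 < m := by linarith
  have hma : 0 < m^a := by positivity
  unfold RR
  rw [abs_of_nonneg (by positivity), div_le_iff₀ (by positivity)]
  calc _ ≤ _ := h
    _ ≤ Real.Gamma (m+e-a) * (3*m)^a := by
      gcongr
      linarith
    _ = _ := by rw [Real.mul_rpow (by norm_num) hm0.le]; ring

lemma RR_tendsto (a e : ℝ) (ha : 0 ≤ a) : Tendsto (fun m => RR m a e) atTop (nhds 1) := by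
  have hl : ∀ d : ℝ, Tendsto (fun m : ℝ => ((m+d)/m)^a) atTop (nhds 1) := by
    intro d
    have h1 : Tendsto (fun m : ℝ => 1 + d/m) atTop (nhds 1) := by
      simpa using (tendsto_const_nhds (x := (1:ℝ))).add
        (Tendsto.div_atTop (tendsto_const_nhds (x := d)) tendsto_id)
    have h2 : Tendsto (fun m : ℝ => (m+d)/m) atTop (nhds 1) := by
      refine h1.congr' ?_
      filter_upwards [eventually_gt_atTop 0] with m hm
      field_simp
    simpa using h2.rpow_const (p := a) (Or.inr ha)
  refine tendsto_of_tendsto_of_tendsto_of_le_of_le' (hl (e-a-1)) (hl e) ?_ ?_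
  · filter_upwards [eventually_gt_atTop 0, eventually_gt_atTop (1+a-e)] with m h0 h1
    have h := gr_lower (m+e-a) a (by linarith) ha
    have e1 : m+e-a+a = m+e := by ring
    rw [e1] at h
    have g1 := Real.Gamma_pos_of_pos (show 0 < m+e-a by linarith)
    have hma : 0 < m^a := by positivity
    unfold RR
    rw [Real.div_rpow (by linarith) h0.le, div_le_div_iff₀ hma (by positivity)]
    have e2 : m + (e-a-1) = m+e-a-1 := by ring
    rw [e2]
    nlinarith
  · filter_upwards [eventually_gt_atTop 0, eventually_gt_atTop (1+a-e)] with m h0 h1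
    have h := gr_upper (m+e-a) a (by linarith) ha
    have e1 : m+e-a+a = m+e := by ring
    rw [e1] at h
    have g1 := Real.Gamma_pos_of_pos (show 0 < m+e-a by linarith)
    have hma : 0 < m^a := by positivity
    unfold RR
    rw [Real.div_rpow (by linarith) h0.le, div_le_div_iff₀ (by positivity) hma]
    nlinarith

lemma cc_nonneg (L : ℝ) (hL : 0 ≤ L) (p : ℕ × ℕ) : 0 ≤ cc L p := by
  have g1 := Real.Gamma_pos_of_pos (show 0 < (p.1:ℝ)+p.2+L+3/2 by positivity)
  have g2 := Real.Gamma_pos_of_pos (show 0 < (p.2:ℝ)+L+1 by positivity)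
  unfold cc
  positivity

def bd (L : ℝ) (M : ℕ) (R : ℝ) (p : ℕ × ℕ) : ℝ :=
  (√Real.pi * 3^(2*L+2) * R^(2*M+1)) *
    (((3*R^2)^p.1 / Real.Gamma (p.1 + (L+3/2))) * ((9*R^4)^p.2 / Real.Gamma (p.2 + (L+1))))

lemma bd_summable (L : ℝ) (M : ℕ) (R : ℝ) (hL : 0 ≤ L) (hR : 1 ≤ R) : Summable (bd L M R) := by
  unfold bd
  refine Summable.mul_left _ ?_
  refine Summable.mul_of_nonneg (f := fun i : ℕ => (3*R^2)^i / Real.Gamma (i + (L+3/2)))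
    (g := fun j : ℕ => (9*R^4)^j / Real.Gamma (j + (L+1)))
    (summ_gamma _ _ (by positivity) (by positivity))
    (summ_gamma _ _ (by positivity) (by positivity)) ?_ ?_
  · intro i
    have := Real.Gamma_pos_of_pos (show 0 < (i:ℝ) + (L+3/2) by positivity)
    simp only [Pi.zero_apply]; positivity
  · intro i
    have := Real.Gamma_pos_of_pos (show 0 < (i:ℝ) + (L+1) by positivity)
    simp only [Pi.zero_apply]; positivity

lemma term_bd (L : ℝ) (M : ℕ) (R : ℝ) (hL : 1/2 ≤ L) (hR : 1 ≤ R) (c : ℝ) (p : ℕ × ℕ)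
    (hc : |c| ≤ 3^(L+((p.1:ℝ)+p.2)+1) * 3^(L+(p.2:ℝ)+1) * cc L p) (z w : ℂ) (hz : ‖z‖ ≤ R)
    (hw : ‖w‖ ≤ R) : ‖(c:ℂ) * mon M z w p‖ ≤ bd L M R p := by
  obtain ⟨i, j⟩ := p
  simp only at hc
  have g1 := Real.Gamma_pos_of_pos (show 0 < (i:ℝ)+(L+3/2) by positivity)
  have g2 := Real.Gamma_pos_of_pos (show 0 < (j:ℝ)+(L+1) by positivity)
  have hmono : Real.Gamma ((i:ℝ)+(L+3/2)) ≤ Real.Gamma ((i:ℝ)+j+L+3/2) := by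
    refine Real.Gamma_strictMonoOn_Ici.monotoneOn ?_ ?_ ?_
    · simp only [Set.mem_Ici]; have : (0:ℝ) ≤ i := by positivity
      linarith
    · simp only [Set.mem_Ici]
      have : (0:ℝ) ≤ i := by positivity
      have : (0:ℝ) ≤ j := by positivity
      linarith
    · have : (0:ℝ) ≤ j := by positivity
      linarith
  have hcc : cc L (i,j) ≤ √Real.pi / (Real.Gamma ((i:ℝ)+(L+3/2)) * Real.Gamma ((j:ℝ)+(L+1))) := by
    unfold cc
    simp only
    rw [← add_assoc (j:ℝ) L 1]
    rw [← add_assoc (j:ℝ) L 1] at g2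
    gcongr
  have hm : ‖mon M z w (i,j)‖ ≤ R^(2*(i+j)+M+1) * R^(2*j+M) := by
    unfold mon
    rw [norm_mul, norm_pow, norm_pow]
    gcongr
  rw [norm_mul, Complex.norm_real, Real.norm_eq_abs]
  calc |c| * ‖mon M z w (i,j)‖ ≤ (3^(L+((i:ℝ)+j)+1) * 3^(L+(j:ℝ)+1) *
        (√Real.pi / (Real.Gamma ((i:ℝ)+(L+3/2)) * Real.Gamma ((j:ℝ)+(L+1))))) *
        (R^(2*(i+j)+M+1) * R^(2*j+M)) := by
        gcongr
        refine hc.trans ?_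
        gcongr
    _ = bd L M R (i,j) := by
      have e1 : (3:ℝ)^(L+((i:ℝ)+j)+1) * 3^(L+(j:ℝ)+1) = 3^(2*L+2) * 3^i * 9^j := by
        have e9 : (9:ℝ)^j = 3^(2*j) := by rw [pow_mul]; norm_num
        rw [e9, ← Real.rpow_natCast 3 i, ← Real.rpow_natCast 3 (2*j),
          ← Real.rpow_add (by norm_num), ← Real.rpow_add (by norm_num),
          ← Real.rpow_add (by norm_num)]
        congr 1; push_cast; ring
      rw [e1]
      unfold bd
      field_simp
      ring

lemma series_tendsto {α : Type*} (F : Filter α) (L : ℝ) (M : ℕ) (hL : 1/2 ≤ L)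
    (c : α → ℕ × ℕ → ℝ) (z w : α → ℂ) (z0 w0 : ℂ) (hz : Tendsto z F (nhds z0))
    (hw : Tendsto w F (nhds w0)) (hc : ∀ p, Tendsto (fun x => c x p) F (nhds (cc L p)))
    (hb : ∀ᶠ x in F, ∀ p : ℕ × ℕ,
      |c x p| ≤ 3^(L+((p.1:ℝ)+p.2)+1) * 3^(L+(p.2:ℝ)+1) * cc L p) :
    Tendsto (fun x => ∑' p, (c x p : ℂ) * mon M (z x) (w x) p) F
      (nhds (∑' p, (cc L p : ℂ) * mon M z0 w0 p)) := by
  set R := max 1 (max (‖z0‖+1) (‖w0‖+1)) with hR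
  refine tendsto_tsum_of_dominated_convergence
    (bd_summable L M R (by linarith) (le_max_left _ _)) ?_ ?_
  · intro p
    unfold mon
    exact ((Complex.continuous_ofReal.tendsto _).comp (hc p)).mul ((hz.pow _).mul (hw.pow _))
  · have h1 : ∀ᶠ x in F, ‖z x‖ < ‖z0‖+1 := hz.norm.eventually_lt_const (by linarith)
    have h2 : ∀ᶠ x in F, ‖w x‖ < ‖w0‖+1 := hw.norm.eventually_lt_const (by linarith)
    filter_upwards [hb, h1, h2] with x hx hx1 hx2 p
    refine term_bd L M R hL (le_max_left _ _) _ _ (hx p) _ _ ?_ ?_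
    · exact hx1.le.trans ((le_max_left _ _).trans (le_max_right _ _))
    · exact hx2.le.trans ((le_max_right _ _).trans (le_max_right _ _))

lemma cc_bd (L : ℝ) (hL : 0 ≤ L) (p : ℕ × ℕ) :
    |cc L p| ≤ 3^(L+((p.1:ℝ)+p.2)+1) * 3^(L+(p.2:ℝ)+1) * cc L p := by
  have h := cc_nonneg L hL p
  rw [abs_of_nonneg h]
  refine le_mul_of_one_le_left h (one_le_mul_of_one_le_of_one_le ?_ ?_)
  · exact Real.one_le_rpow (by norm_num) (by positivity)
  · exact Real.one_le_rpow (by norm_num) (by positivity)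

lemma ser_summable (L : ℝ) (M : ℕ) (hL : 1/2 ≤ L) (z w : ℂ) :
    Summable (fun p => (cc L p : ℂ) * mon M z w p) := by
  refine Summable.of_norm_bounded (bd_summable L M (max 1 (max ‖z‖ ‖w‖)) (by linarith)
    (le_max_left _ _)) fun p => ?_
  refine term_bd L M _ hL (le_max_left _ _) _ _ (cc_bd L (by linarith) p) _ _ ?_ ?_
  · exact ((le_max_left _ _).trans (le_max_right _ _))
  · exact ((le_max_right _ _).trans (le_max_right _ _))

lemma ko_eq (L : ℝ) (M : ℕ) (hM : 2*L = (M : ℝ)) (hL : 1/2 ≤ L) (z w : ℂ) :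
    ko M z w = ∑' p, (cc L p : ℂ) * mon M z w p - ∑' p, (cc L p : ℂ) * mon M w z p := by
  rw [← (ser_summable L M hL z w).tsum_sub (ser_summable L M hL w z)]
  exact (hasSum_ko L M hM z w).tsum_eq.symm

def cN (b L : ℝ) (N : ℕ) (p : ℕ × ℕ) : ℝ :=
  if p.1 + p.2 < N then RR ((b+1)*N+L) (L+((p.1:ℝ)+p.2)+1) 1 *
    RR ((b+1)*N+L) (L+(p.2:ℝ)+1) (3/2) * cc L p else 0

lemma m_atTop (b L : ℝ) (hb : 0 < b) : Tendsto (fun N : ℕ => (b+1)*N+L) atTop atTop :=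
  tendsto_atTop_add_const_right _ _
    (Tendsto.const_mul_atTop (by linarith) tendsto_natCast_atTop_atTop)

lemma cN_tendsto (b L : ℝ) (hb : 0 < b) (hL : 0 ≤ L) (p : ℕ × ℕ) :
    Tendsto (fun N => cN b L N p) atTop (nhds (cc L p)) := by
  have h1 := (RR_tendsto (L+((p.1:ℝ)+p.2)+1) 1 (by positivity)).comp (m_atTop b L hb)
  have h2 := (RR_tendsto (L+(p.2:ℝ)+1) (3/2) (by positivity)).comp (m_atTop b L hb)
  have h3 := (h1.mul h2).mul_const (cc L p)
  simp only [one_mul] at h3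
  refine h3.congr' ?_
  filter_upwards [eventually_gt_atTop (p.1+p.2)] with N hN
  simp [cN, hN]

lemma cN_bd (b L : ℝ) (hb : 0 < b) (hL : 0 ≤ L) (N : ℕ) (hN : 1 ≤ N) (p : ℕ × ℕ) :
    |cN b L N p| ≤ 3^(L+((p.1:ℝ)+p.2)+1) * 3^(L+(p.2:ℝ)+1) * cc L p := by
  have h := cc_nonneg L hL p
  unfold cN
  split_ifs with hp
  · have hp' : (p.1:ℝ)+p.2+1 ≤ N := by exact_mod_cast hp
    have hN' : (1:ℝ) ≤ N := by exact_mod_cast hN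
    have hbN : 0 < b * N := by positivity
    have hp1 : (0:ℝ) ≤ p.1 := by positivity
    rw [abs_mul, abs_mul, abs_of_nonneg h]
    gcongr
    · exact RR_bound _ _ _ (by nlinarith) (by positivity) (by nlinarith) (by norm_num)
    · exact RR_bound _ _ _ (by nlinarith) (by positivity) (by nlinarith) (by norm_num)
  · rw [abs_zero]; positivity

lemma pref_tendsto {α : Type*} (F : Filter α) (m : α → ℝ) (z w : α → ℂ) (z0 w0 : ℂ)
    (hm : Tendsto m F atTop) (hz : Tendsto z F (nhds z0)) (hw : Tendsto w F (nhds w0)) :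
    Tendsto (fun x => ((1 + (z x / (√(m x) : ℝ))^2) * (1 + (w x / (√(m x) : ℝ))^2)) ^
      ((-(m x - 1/2) : ℝ) : ℂ)) F (nhds (Complex.exp (-z0^2-w0^2))) := by
  have hinv : Tendsto (fun x => (((m x)⁻¹ : ℝ) : ℂ)) F (nhds 0) := by
    have := (Complex.continuous_ofReal.tendsto 0).comp (tendsto_inv_atTop_zero.comp hm)
    rw [Complex.ofReal_zero] at this
    exact this
  set u : α → ℂ := fun x => (z x)^2 * (((m x)⁻¹ : ℝ) : ℂ) + (w x)^2 * (((m x)⁻¹ : ℝ) : ℂ) +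
    (z x)^2 * (w x)^2 * (((m x)⁻¹ : ℝ) : ℂ)^2 with hu
  have hu0 : Tendsto u F (nhds 0) := by
    have := (((hz.pow 2).mul hinv).add ((hw.pow 2).mul hinv)).add
      (((hz.pow 2).mul (hw.pow 2)).mul (hinv.pow 2))
    rw [show z0^2 * 0 + w0^2 * 0 + z0^2 * w0^2 * 0^2 = (0:ℂ) by ring] at this
    exact this
  have h1u : Tendsto (fun x => 1 + u x) F (nhds 1) := by
    simpa using hu0.const_add 1
  have hmu : Tendsto (fun x => (m x : ℂ) * u x) F (nhds (z0^2+w0^2)) := by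
    have := ((hz.pow 2).add (hw.pow 2)).add (((hz.pow 2).mul (hw.pow 2)).mul hinv)
    simp only [mul_zero, add_zero] at this
    refine this.congr' ?_
    filter_upwards [hm.eventually_gt_atTop 0] with x hx
    have : (m x : ℂ) ≠ 0 := by exact_mod_cast hx.ne'
    simp only [hu]
    push_cast
    field_simp
  have hd : HasDerivAt Complex.log 1 1 := by
    simpa using Complex.hasDerivAt_log (z := 1) (by simp)
  have hds : Tendsto (fun x => dslope Complex.log 1 (1 + u x)) F (nhds 1) := by
    have h := continuousAt_dslope_same.mpr hd.differentiableAt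
    have h' := h.tendsto.comp h1u
    rwa [dslope_same, hd.deriv] at h'
  have hlog : ∀ v : ℂ, Complex.log (1+v) = v * dslope Complex.log 1 (1+v) := by
    intro v
    have := sub_smul_dslope Complex.log 1 (1+v)
    simpa using this.symm
  have hml : Tendsto (fun x => (m x : ℂ) * Complex.log (1 + u x)) F (nhds (z0^2+w0^2)) := by
    have := hmu.mul hds
    rw [mul_one] at this
    refine this.congr fun x => ?_
    rw [hlog]; ring
  have hl0 : Tendsto (fun x => Complex.log (1 + u x)) F (nhds 0) := by
    have := hu0.mul hds
    rw [zero_mul] at this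
    exact this.congr fun x => (hlog _).symm
  have hE : Tendsto (fun x => Complex.exp (-((m x : ℂ) * Complex.log (1 + u x)) +
      (1/2) * Complex.log (1 + u x))) F (nhds (Complex.exp (-z0^2-w0^2))) := by
    refine (Complex.continuous_exp.tendsto _).comp ?_
    have := hml.neg.add (hl0.const_mul (1/2))
    convert this using 2
    ring
  refine hE.congr' ?_
  have hne : ∀ᶠ x in F, 1 + u x ≠ 0 := h1u.eventually_ne one_ne_zero
  filter_upwards [hne, hm.eventually_gt_atTop 0] with x hx hx0
  have hs : ((√(m x) : ℝ) : ℂ)^2 = (m x : ℂ) := by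
    rw [← Complex.ofReal_pow, Real.sq_sqrt hx0.le]
  have : (1 + (z x / (√(m x) : ℝ))^2) * (1 + (w x / (√(m x) : ℝ))^2) = 1 + u x := by
    rw [div_pow, div_pow, hs]
    simp only [hu]
    push_cast
    ring
  rw [this, Complex.cpow_def_of_ne_zero hx]
  congr 1
  push_cast
  ring

lemma real_term (N : ℕ) (n L : ℝ) (M k l : ℕ) (hM : 2*L = (M : ℝ)) (hn : (N:ℝ) ≤ n) (hk : k < N)
    (hl : l ≤ k) :
    (n+L)^(-(3/2) : ℝ) * (Real.pi * Real.Gamma (2*n+2*L+2) / 2^(2*n+2*L+1)) /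
      (√(n+L)^(2*k+M+1) * √(n+L)^(2*l+M) * (Real.Gamma (k+L+3/2) * Real.Gamma (n-k) *
        Real.Gamma (n-l+1/2) * Real.Gamma (l+L+1))) =
    RR (n+L) (L+k+1) 1 * RR (n+L) (L+l+1) (3/2) *
      (√Real.pi / (Real.Gamma (k+L+3/2) * Real.Gamma (l+L+1))) := by
  have hL : 0 ≤ L := by
    have : (0:ℝ) ≤ M := by positivity
    linarith
  have hk' : (k:ℝ) + 1 ≤ N := by exact_mod_cast hk
  have hl' : (l:ℝ) ≤ k := by exact_mod_cast hl
  have hl0 : (0:ℝ) ≤ l := by positivity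
  unfold RR
  have a1 : n + L + 1 - (L+k+1) = n - k := by ring
  have a2 : n + L + 3/2 - (L+l+1) = n - l + 1/2 := by ring
  rw [a1, a2]
  have hm : 0 < n + L := by linarith
  have hd := Real.Gamma_mul_Gamma_add_half (n+L+1)
  have a3 : n+L+1+1/2 = n+L+3/2 := by ring
  have a4 : 2*(n+L+1) = 2*n+2*L+2 := by ring
  have a5 : 1 - (2*n+2*L+2) = -(2*n+2*L+1) := by ring
  rw [a3, a4, a5, Real.rpow_neg (by norm_num)] at hd
  have g1 := Real.Gamma_pos_of_pos (show 0 < n - k by linarith)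
  have g2 := Real.Gamma_pos_of_pos (show 0 < n - l + 1/2 by linarith)
  have g3 := Real.Gamma_pos_of_pos (show 0 < k + L + 3/2 by linarith)
  have g4 := Real.Gamma_pos_of_pos (show 0 < l + L + 1 by linarith)
  have hp : (n+L)^(3/2:ℝ) * (√(n+L)^(2*k+M+1) * √(n+L)^(2*l+M)) =
      (n+L)^(L+k+1) * (n+L)^(L+l+1) := by
    rw [← pow_add, Real.sqrt_eq_rpow, ← Real.rpow_natCast, ← Real.rpow_mul hm.le,
      ← Real.rpow_add hm, ← Real.rpow_add hm]
    congr 1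
    push_cast
    rw [← hM]; ring
  rw [Real.rpow_neg hm.le]
  have q1 : 0 < (n+L)^(3/2:ℝ) := by positivity
  have q2 : 0 < (n+L)^(L+k+1) := by positivity
  have q3 : 0 < (n+L)^(L+l+1) := by positivity
  have q4 : 0 < √(n+L)^(2*k+M+1) := by positivity
  have q5 : 0 < √(n+L)^(2*l+M) := by positivity
  have q6 : (0:ℝ) < 2^(2*n+2*L+1) := by positivity
  have hpi : Real.pi = √Real.pi * √Real.pi := (Real.mul_self_sqrt Real.pi_pos.le).symm
  have hd2 : Real.pi * Real.Gamma (2*n+2*L+2) / 2^(2*n+2*L+1) =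
      √Real.pi * (Real.Gamma (n+L+1) * Real.Gamma (n+L+3/2)) := by
    rw [hd]; nth_rewrite 1 [hpi]; field_simp
  rw [hd2]
  have e1 : ∀ X A B C D : ℝ, ((n+L)^(3/2:ℝ))⁻¹ * X / (√(n+L)^(2*k+M+1) * √(n+L)^(2*l+M) *
      (A * B * C * D)) = X / (((n+L)^(3/2:ℝ) * (√(n+L)^(2*k+M+1) * √(n+L)^(2*l+M))) * (A*B*C*D)) := by
    intro X A B C D
    rw [inv_mul_eq_div, div_div]; congr 1; ring
  rw [e1, hp]
  field_simp

lemma sum_reindex (N : ℕ) (f : ℕ → ℕ → ℂ) :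
    ∑ k ∈ range N, ∑ l ∈ range (k+1), f k l =
      ∑' p : ℕ × ℕ, if p.1 + p.2 < N then f (p.1+p.2) p.2 else 0 := by
  rw [tsum_eq_sum (s := (range N ×ˢ range N))]
  · rw [← Finset.sum_filter, Finset.sum_sigma']
    refine Finset.sum_bij' (fun x _ => (x.1 - x.2, x.2)) (fun p _ => ⟨p.1+p.2, p.2⟩) ?_ ?_ ?_ ?_ ?_
    · rintro ⟨k, l⟩ h
      simp at h ⊢; omega
    · rintro ⟨i, j⟩ h
      simp at h ⊢; omega
    · rintro ⟨k, l⟩ h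
      simp at h
      have : k - l + l = k := by omega
      simp [this]
    · rintro ⟨i, j⟩ h
      simp
    · rintro ⟨k, l⟩ h
      simp at h
      have : k - l + l = k := by omega
      simp [this]
  · rintro ⟨i, j⟩ h
    simp at h ⊢
    intro h2
    have := h (by omega)
    omega

lemma GK_eq (b L : ℝ) (hb : 0 < b) (M : ℕ) (hM : 2*L = (M : ℝ)) (N : ℕ) (hN : 1 ≤ N) (z w : ℂ) :
    ((((b+1)*N+L)^(-(3/2) : ℝ) : ℝ) : ℂ) * GK N ((b+1)*N) L (z / (√((b+1)*N+L) : ℝ))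
      (w / (√((b+1)*N+L) : ℝ)) = ∑' p, (cN b L N p : ℂ) * mon M z w p := by
  have hL : 0 ≤ L := by
    have : (0:ℝ) ≤ M := by positivity
    linarith
  have hN' : (1:ℝ) ≤ N := by exact_mod_cast hN
  have hn : (N:ℝ) ≤ (b+1)*N := by nlinarith
  have hm : 0 < (b+1)*N+L := by nlinarith
  have hs := sum_reindex N (fun k l : ℕ =>
      ((RR ((b+1)*N+L) (L+k+1) 1 * RR ((b+1)*N+L) (L+l+1) (3/2) *
      (√Real.pi / (Real.Gamma (k+L+3/2) * Real.Gamma (l+L+1))) : ℝ) : ℂ) *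
      (z^(2*k+M+1) * w^(2*l+M)))
  refine Eq.trans ?_ (hs.trans (tsum_congr fun p => ?_))
  swap
  · unfold cN cc mon
    split_ifs <;> simp
  unfold GK
  rw [← mul_assoc, Finset.mul_sum]
  refine Finset.sum_congr rfl fun k hk => ?_
  rw [Finset.mul_sum]
  refine Finset.sum_congr rfl fun l hl => ?_
  rw [Finset.mem_range] at hk hl
  rw [← real_term N ((b+1)*N) L M k l hM hn hk (by omega)]
  have e1 : ((2*k+2*L+1 : ℝ) : ℂ) = ((2*k+M+1 : ℕ) : ℂ) := by rw [hM]; push_cast; ring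
  have e2 : ((2*l+2*L : ℝ) : ℂ) = ((2*l+M : ℕ) : ℂ) := by rw [hM]; push_cast; ring
  rw [e1, e2, Complex.cpow_natCast, Complex.cpow_natCast]
  simp only [Complex.Gamma_ofReal]
  have e3 : (2:ℂ) ^ ((2*((b+1)*N)+2*L+1 : ℝ) : ℂ) = (((2:ℝ) ^ (2*((b+1)*N)+2*L+1 : ℝ) : ℝ) : ℂ) := by
    rw [Complex.ofReal_cpow (by norm_num)]; norm_num
  rw [e3, div_pow, div_pow]
  simp only [Complex.ofReal_mul, Complex.ofReal_div, Complex.ofReal_pow]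
  generalize ((((b+1)*N+L)^(-(3/2) : ℝ) : ℝ) : ℂ) = X1
  generalize (((2:ℝ) ^ (2*((b+1)*N)+2*L+1 : ℝ) : ℝ) : ℂ) = X2
  generalize ((√((b+1)*N+L) : ℝ) : ℂ) = X3
  simp only [div_eq_mul_inv, mul_inv]
  ring

lemma resc_eq (b L : ℝ) (hb : 0 < b) (M : ℕ) (hM : 2*L = (M : ℝ)) (N : ℕ) (hN : 1 ≤ N) (z w : ℂ) :
    resc N ((b+1)*N) L 0 z w =
      ((1 + (z / (√((b+1)*N+L) : ℝ))^2) * (1 + (w / (√((b+1)*N+L) : ℝ))^2)) ^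
      ((-((b+1)*N+L - 1/2) : ℝ) : ℂ) *
      (∑' p, (cN b L N p : ℂ) * mon M z w p - ∑' p, (cN b L N p : ℂ) * mon M w z p) := by
  have hN' : (N:ℝ) ≠ 0 := by positivity
  have hd : N * dlt N ((b+1)*N) L 0 = (b+1)*N+L := by
    unfold dlt
    simp
    field_simp
  rw [← GK_eq b L hb M hM N hN z w, ← GK_eq b L hb M hM N hN w z]
  unfold resc sc KK
  rw [hd]
  simp only [Complex.ofReal_zero, zero_add]
  rw [show ((1:ℝ)+0^2)^(-3:ℝ) = 1 by simp]
  push_cast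
  ring

/-- equation (2.15), case (c): kernel convergence at the singular
origin (`2L = M` a positive integer, zooming point `p = 0`). -/
theorem kernel_convergence_origin (b L : ℝ) (hb : 0 < b) (M : ℕ) (hM : 2*L = (M : ℝ))
    (hM1 : 1 ≤ M) (K : Set (ℂ × ℂ)) (hK : IsCompact K) :
    TendstoUniformlyOn
      (fun (N : ℕ) (q : ℂ × ℂ) => resc N ((b+1)*N) L 0 q.1 q.2)
      (fun q => Complex.exp (-q.1^2-q.2^2) * ko M q.1 q.2)
      (atTop ⊓ 𝓟 (Ssing b)) K := by
  have hM1' : (1:ℝ) ≤ M := by exact_mod_cast hM1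
  have hL : 1/2 ≤ L := by linarith
  have hL0 : 0 ≤ L := by linarith
  rw [← tendstoLocallyUniformlyOn_iff_tendstoUniformlyOn_of_compact hK,
    tendstoLocallyUniformlyOn_iff_forall_tendsto]
  rintro ⟨z0, w0⟩ -
  -- limit function is continuous
  have hser : ∀ {α : Type} (F : Filter α) (z w : α → ℂ), Tendsto z F (nhds z0) →
      Tendsto w F (nhds w0) → ∀ c : α → ℕ × ℕ → ℝ, (∀ p, Tendsto (fun x => c x p) F (nhds (cc L p))) →
      (∀ᶠ x in F, ∀ p : ℕ × ℕ, |c x p| ≤ 3^(L+((p.1:ℝ)+p.2)+1) * 3^(L+(p.2:ℝ)+1) * cc L p) →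
      Tendsto (fun x => ∑' p, (c x p : ℂ) * mon M (z x) (w x) p -
        ∑' p, (c x p : ℂ) * mon M (w x) (z x) p) F (nhds (ko M z0 w0)) := by
    intro α F z w hz hw c hc hb
    rw [ko_eq L M hM hL]
    exact (series_tendsto F L M hL c z w z0 w0 hz hw hc hb).sub
      (series_tendsto F L M hL c w z w0 z0 hw hz hc hb)
  set F : Filter (ℕ × (ℂ × ℂ)) := (atTop ⊓ 𝓟 (Ssing b)) ×ˢ nhdsWithin (z0, w0) K with hF
  have h2 : Tendsto (fun y : ℕ × (ℂ × ℂ) => y.2) F (nhds (z0, w0)) :=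
    tendsto_snd.mono_right nhdsWithin_le_nhds
  have hN : Tendsto (fun y : ℕ × (ℂ × ℂ) => y.1) F atTop := tendsto_fst.mono_right inf_le_left
  have hz : Tendsto (fun y : ℕ × (ℂ × ℂ) => y.2.1) F (nhds z0) :=
    (continuous_fst.tendsto (z0, w0)).comp h2
  have hw : Tendsto (fun y : ℕ × (ℂ × ℂ) => y.2.2) F (nhds w0) :=
    (continuous_snd.tendsto (z0, w0)).comp h2
  have hf : Tendsto (fun y : ℕ × (ℂ × ℂ) => Complex.exp (-y.2.1^2-y.2.2^2) * ko M y.2.1 y.2.2) F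
      (nhds (Complex.exp (-z0^2-w0^2) * ko M z0 w0)) := by
    refine Tendsto.mul ?_ ?_
    · exact (Complex.continuous_exp.tendsto _).comp ((hz.pow 2).neg.sub (hw.pow 2))
    · have := hser F _ _ hz hw (fun _ => cc L) (fun p => tendsto_const_nhds)
        (Eventually.of_forall fun _ => cc_bd L hL0)
      simp only [← ko_eq L M hM hL] at this
      exact this
  have hg : Tendsto (fun y : ℕ × (ℂ × ℂ) => resc y.1 ((b+1)*y.1) L 0 y.2.1 y.2.2) F
      (nhds (Complex.exp (-z0^2-w0^2) * ko M z0 w0)) := by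
    have hA := pref_tendsto F _ _ _ z0 w0 ((m_atTop b L hb).comp hN) hz hw
    have hB := hser F _ _ hz hw (fun y => cN b L y.1) (fun p => (cN_tendsto b L hb hL0 p).comp hN)
      ((hN.eventually_ge_atTop 1).mono fun y hy => cN_bd b L hb hL0 y.1 hy)
    refine (hA.mul hB).congr' ?_
    filter_upwards [hN.eventually_ge_atTop 1] with y hy
    rw [resc_eq b L hb M hM y.1 hy]
    rfl
  have := hf.prodMk_nhds hg
  exact this.mono_right (nhds_le_uniformity _)

end SI
end
end
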